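/- arXiv:1411.0645 — 4 statements merged into one kernel-verified Lean document; each statement's English description precedes it below -/
import Mathlib

section
/- Let 0 < p < q < +∞ and 1/r = 1/p − 1/q. Let μ and ν be non-negative Borel measures on I = (a,b) ⊆ ℝ, let w ∈ B⁺(I), and let u ∈ B⁺(I) satisfy ‖u‖_{q,[t,b),ν} < ∞ for all t ∈ I and u ≠ 0 ν-a.e. on (a,b). Then there exists a constant c > 0 such that ‖gw‖_{p,(a,b),μ} ≤ c ‖u(x) ‖g‖_{∞,(a,x),μ}‖_{q,(a,b),ν} for all g ∈ B⁺(I) if and only if B₂ := ( ∫_{(a,b)} ‖w‖_{p,[x,b),μ}^r d( ‖u‖_{q,[x,b),ν}^{−r} ) )^{1/r} + ‖w‖_{p,(a,b),μ} · ‖u‖_{q,(a,b),ν}^{−1} < ∞, where the integral is the Lebesgue–Stieltjes integral with respect to the non-decreasing left-continuous function x ↦ ‖u‖_{q,[x,b),ν}^{−r}. Moreover, the best possible constant c satisfies c ≈ B₂, with equivalence constants depending only on p and q. -/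
/-!
Put `τ = w ^ p μ` and `σ = u ^ q ν` on `(a,b)`, with tails `T x = τ [x,b)` and `S x = σ [x,b)`,
and let `γ = r / q`, so that `r / p = γ + 1`. The measure `L = lam` on `(a,b)` is the
Lebesgue–Stieltjes measure of `S ^ (-γ)`, and `B₂ ^ r` is comparable to
`∫ T ^ (γ + 1) dL + τ(a,b) ^ (γ + 1) σ(a,b) ^ (-γ)`. Both directions rest on one extremal function,
`Ψ x = ∫_{z < x} T z ^ (γ + 1) σ(z,b)⁻¹ dL z`, possibly plus a constant:

* by Tonelli, `∫ Ψ dσ ≤ ∫ T ^ (γ + 1) dL` (`lintegral_extremal_le`);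
* including the endpoint `z = t` in the integral, `Ψ` dominates a multiple of
  `T t ^ (γ + 1) L(a,t] ^ (1 / γ + 1)` (`extremal_ge`). This uses `L(a,z] ≤ σ(z,b) ^ (-γ)` and the
  inequality `M ^ (k + 1) ≲ ∫ M ^ k dM` for the distribution function `M z = L(a,z]`, proved with
  atoms allowed in `measure_univ_rpow_le`. Moreover `σ(t,b) ^ (-γ) ≤ σ(a,b) ^ (-γ) + L(a,t]`.

Sufficiency: `A = (C (K + Ψ)) ^ (1 / (γ + 1))`, for suitable constants `C` and `K`, satisfies
`τ [t,b) ≤ ∫_{(t,b)} A dσ` (`exists_dominating`). If `G x` is the essential supremum of `g` over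
`(a,x)`, a comparison of level sets then gives `∫ g ^ p dτ ≤ ∫ G ^ p A dσ`, and Hölder's inequality
with exponents `q / p` and `γ + 1` finishes (`upper_core`).

Necessity: the second term of `B₂` comes from `g = 1` (`lower_first`). For the first term, `L` is
restricted to `[α,β)` with `S β > 0`, and the test function is `Ψ ^ (1 / q)`, endpoint included. The lower
bound for `Ψ` makes the left-hand side at least a multiple of `X ^ (1 / p)`, and Tonelli makes the
right-hand side at most `c X ^ (1 / q)`, where `X = ∫_{[α,β)} T ^ (γ + 1) dL` is finite and can be
divided out (`lower_trunc`); exhausting the interval gives the claim (`lower_second`).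

If `σ(t,b) = 0` for some `t` in `(a,b)` while `σ(a,b) > 0`, then `L(a,t] = ∞`
(`LSPair.Iic_eq_top`), and finiteness of `B₂` forces `T t = 0`; this matches the case distinctions
above. Essential suprema with respect to `μ` and pointwise bounds are related by `eSup_null` and
`eSup_le`.
-/

open MeasureTheory Set ENNReal

noncomputable section

/-- The `μ`-essential supremum of `f` over `E`:
`‖f‖_{∞,E,μ} = sup {α : μ({y ∈ E : f y ≥ α}) > 0}`. -/
def eSup (μ : Measure ℝ) (E : Set ℝ) (f : ℝ → ℝ≥0∞) : ℝ≥0∞ :=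
  sSup {α : ℝ≥0∞ | 0 < μ {y | y ∈ E ∧ α ≤ f y}}

/-- `‖f‖_{p,E,μ}` for `0 < p ≤ ∞`. -/
def Nrm (p : ℝ≥0∞) (μ : Measure ℝ) (E : Set ℝ) (f : ℝ → ℝ≥0∞) : ℝ≥0∞ :=
  if p = ⊤ then eSup μ E f
  else (∫⁻ x in E, f x ^ p.toReal ∂μ) ^ (1 / p.toReal)

/-- `‖u(x) ‖g‖_{∞,(a,x),μ}‖_{q,(a,b),ν}`. -/
def RHSdual (q : ℝ≥0∞) (a b : ℝ) (μ ν : Measure ℝ) (u g : ℝ → ℝ≥0∞) : ℝ≥0∞ :=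
  Nrm q ν (Ioo a b) (fun x => u x * eSup μ (Ioo a x) g)

/-- The best constant in the inequality
`‖gw‖_{p,(a,b),μ} ≤ c ‖u(x) ‖g‖_{∞,(a,x),μ}‖_{q,(a,b),ν}` over all `g ∈ B⁺((a,b))`. -/
def bestCdual (p q : ℝ≥0∞) (a b : ℝ) (μ ν : Measure ℝ) (w u : ℝ → ℝ≥0∞) : ℝ≥0∞ :=
  sInf {c : ℝ≥0∞ | ∀ g : ℝ → ℝ≥0∞, Measurable g →
    Nrm p μ (Ioo a b) (fun t => g t * w t) ≤ c * RHSdual q a b μ ν u g}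

/-! ### Layer cake, monotone limits and half-lines -/

/-- Comparison of integrals from comparison of superlevel sets, for `[0,∞]`-valued functions and
arbitrary measures; the real-valued layer cake formula is applied to truncations. -/
lemma lintegral_le_of_meas_lt {m₁ m₂ : Measure ℝ} {g G : ℝ → ℝ≥0∞} (hg : Measurable g)
    (hG : Measurable G) (h : ∀ y : ℝ≥0∞, m₁ {x | y < g x} ≤ m₂ {x | y < G x}) :
    ∫⁻ x, g x ∂m₁ ≤ ∫⁻ x, G x ∂m₂ := by
  have htr : ∀ (m : Measure ℝ) (f : ℝ → ℝ≥0∞), Measurable f → ∀ n : ℕ,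
      ∫⁻ x, min (f x) n ∂m = ∫⁻ t in Ioi (0:ℝ), m {x | ENNReal.ofReal t < min (f x) n} := by
    intro m f hf n
    have hfin : ∀ x, min (f x) (n : ℝ≥0∞) ≠ ⊤ := fun x =>
      ne_top_of_le_ne_top (ENNReal.natCast_ne_top n) (min_le_right _ _)
    have hm : Measurable fun x => min (f x) (n : ℝ≥0∞) := hf.min measurable_const
    have := lintegral_eq_lintegral_meas_lt m (f := fun x => (min (f x) (n : ℝ≥0∞)).toReal)
      (Filter.Eventually.of_forall fun x => ENNReal.toReal_nonneg) hm.ennreal_toReal.aemeasurable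
    simp only [ENNReal.ofReal_toReal (hfin _)] at this
    rw [this]
    refine setLIntegral_congr_fun measurableSet_Ioi fun t ht => ?_
    congr 1
    ext x
    exact (ENNReal.ofReal_lt_iff_lt_toReal (le_of_lt ht) (hfin x)).symm
  have hsup : ∀ x, g x = ⨆ n : ℕ, min (g x) n := by
    intro x
    rw [← inf_iSup_eq, ENNReal.iSup_natCast, inf_top_eq]
  calc ∫⁻ x, g x ∂m₁ = ⨆ n : ℕ, ∫⁻ x, min (g x) n ∂m₁ := by
        rw [← lintegral_iSup (fun n => hg.min measurable_const)]
        · exact lintegral_congr hsup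
        · intro i j hij x
          exact min_le_min le_rfl (by exact_mod_cast hij)
    _ ≤ ∫⁻ x, G x ∂m₂ := by
        refine iSup_le fun n => ?_
        refine le_trans ?_ (lintegral_mono (fun x => min_le_left (G x) (n : ℝ≥0∞)))
        rw [htr m₁ g hg n, htr m₂ G hG n]
        refine lintegral_mono fun t => ?_
        by_cases hn : ENNReal.ofReal t < n
        · simpa [lt_min_iff, hn] using h (ENNReal.ofReal t)
        · simp [hn]

lemma measure_Ioi_le {m : Measure ℝ} {t b : ℝ} {c : ℝ≥0∞} (htb : t < b)
    (h : ∀ β, t < β → β < b → m (Ici β) ≤ c) : m (Ioi t) ≤ c := by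
  obtain ⟨u, hu, hmem, hlim⟩ := exists_seq_strictAnti_tendsto' htb
  have hU : Ioi t = ⋃ n, Ici (u n) := by
    ext x
    simp only [mem_Ioi, mem_iUnion, mem_Ici]
    constructor
    · intro hx
      exact ((hlim.eventually (gt_mem_nhds hx)).exists).imp fun n hn => le_of_lt hn
    · rintro ⟨n, hn⟩
      exact lt_of_lt_of_le (hmem n).1 hn
  rw [hU, Monotone.measure_iUnion (fun i j hij => Ici_subset_Ici.2 (hu.antitone hij))]
  exact iSup_le fun n => h _ (hmem n).1 (hmem n).2

lemma measure_Ioo_le {m : Measure ℝ} {a β : ℝ} {c : ℝ≥0∞}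
    (h : ∀ α, a < α → α < β → m (Ico α β) ≤ c) : m (Ioo a β) ≤ c := by
  rcases lt_or_ge a β with hab | hab
  · have := measure_Ioi_le (m := m.restrict (Iio β)) hab (c := c) (by
      intro α h1 h2
      rw [Measure.restrict_apply measurableSet_Ici, Ici_inter_Iio]
      exact h α h1 h2)
    rwa [Measure.restrict_apply measurableSet_Ioi, Ioi_inter_Iio] at this
  · simp [Ioo_eq_empty_of_le hab]

/-- An upper bound by `s ^ (-γ)` is an upper bound for `s`. Limits of tails of `σ` can thus be taken
by monotone convergence of measures, with no continuity argument at `0` or `∞`. -/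
lemma le_inv_rpow_iff {γ : ℝ} (hγ : 0 < γ) (x s : ℝ≥0∞) :
    x ≤ (s ^ γ)⁻¹ ↔ s ≤ x⁻¹ ^ γ⁻¹ := by
  rw [ENNReal.le_inv_iff_le_inv, ENNReal.le_rpow_inv_iff hγ]

/-- For a finite measure, at least a quarter of the mass sits at points `z` on one fixed side of
which (`z` included) more than a quarter of the mass is found; this is the chain-rule estimate `M ^ (k + 1) ≲ ∫ M ^ k dM` for the
distribution function `M`, with atoms allowed. The function `v` stands for either of
`z ↦ m (Iic z)` and `z ↦ m (Ici z)`, for which `hsq` is `measure_sq_le`. -/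
lemma measure_univ_rpow_le {m : Measure ℝ} [IsFiniteMeasure m] {k : ℝ} (hk : 0 < k)
    {v : ℝ → ℝ≥0∞} (hv : Measurable v) (hsq : m univ * m univ ≤ 2 * ∫⁻ z, v z ∂m)
    (hle : ∀ z, v z ≤ m univ) :
    m univ ^ (k + 1) ≤ 4 ^ (k + 1) * ∫⁻ z, v z ^ k ∂m := by
  set M := m univ with hM
  have hMtop : M ≠ ⊤ := measure_ne_top m univ
  rcases eq_or_ne M 0 with h0 | h0
  · rw [h0, ENNReal.zero_rpow_of_pos (by linarith)]; exact zero_le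
  set Z := {z | M / 4 < v z} with hZ
  have hZm : MeasurableSet Z := measurableSet_lt measurable_const hv
  have h1 : ∫⁻ z, v z ∂m ≤ M / 4 * M + M * m Z := by
    calc ∫⁻ z, v z ∂m ≤ ∫⁻ z, (M / 4 + Z.indicator (fun _ => M) z) ∂m := by
          refine lintegral_mono fun z => ?_
          by_cases hz : z ∈ Z
          · simpa [hz] using le_add_left (hle z)
          · simpa [hz] using not_lt.1 hz
      _ = M / 4 * M + M * m Z := by
          rw [lintegral_add_left measurable_const, lintegral_const, lintegral_indicator hZm,
            setLIntegral_const]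
  have h2 : M / 4 ≤ m Z := by
    have hZt : m Z ≠ ⊤ := measure_ne_top m Z
    have h3 := hsq.trans (mul_le_mul_right h1 2)
    clear_value M
    lift M to NNReal using hMtop
    obtain ⟨z, hz⟩ : ∃ z : NNReal, m Z = z := ⟨(m Z).toNNReal, (ENNReal.coe_toNNReal hZt).symm⟩
    rw [hz] at h3 ⊢
    have h4 : ((4 : NNReal) : ℝ≥0∞) = 4 := by norm_num
    have h5 : ((2 : NNReal) : ℝ≥0∞) = 2 := by norm_num
    rw [← h4, ← h5] at h3
    rw [← h4]
    rw [← ENNReal.coe_div (by norm_num)] at h3 ⊢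
    norm_cast at h3 ⊢
    have h0' : 0 < M := pos_iff_ne_zero.2 (by exact_mod_cast h0)
    rw [← NNReal.coe_le_coe] at h3 ⊢
    push_cast at h3 ⊢
    have h0'' : (0:ℝ) < M := h0'
    nlinarith
  have h3 : (M / 4) ^ k * (M / 4) ≤ ∫⁻ z, v z ^ k ∂m := by
    calc (M / 4) ^ k * (M / 4) ≤ (M / 4) ^ k * m Z := by gcongr
      _ = ∫⁻ z in Z, (M / 4) ^ k ∂m := by rw [setLIntegral_const]
      _ ≤ ∫⁻ z in Z, v z ^ k ∂m := by
          refine setLIntegral_mono' hZm fun z hz => ?_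
          exact ENNReal.rpow_le_rpow (le_of_lt hz) hk.le
      _ ≤ _ := setLIntegral_le_lintegral _ _
  have hd : (M / 4) ^ k * (M / 4) = (M / 4) ^ (k + 1) := by
    rw [ENNReal.rpow_add_of_nonneg k 1 hk.le zero_le_one, ENNReal.rpow_one]
  calc M ^ (k + 1) = 4 ^ (k + 1) * (M / 4) ^ (k + 1) := by
        rw [← ENNReal.mul_rpow_of_nonneg _ _ (by linarith : (0:ℝ) ≤ k + 1),
          ENNReal.mul_div_cancel (by norm_num) (by norm_num)]
    _ ≤ _ := by rw [← hd]; gcongr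

/-- Each of the two closed half-planes bounded by the diagonal carries at least half of the mass of
`m × m`. -/
lemma measure_sq_le (m : Measure ℝ) [IsFiniteMeasure m] :
    m univ * m univ ≤ 2 * ∫⁻ z, m (Iic z) ∂m ∧ m univ * m univ ≤ 2 * ∫⁻ z, m (Ici z) ∂m := by
  have hmi : Measurable fun z => m (Iic z) :=
    Monotone.measurable fun x y h => measure_mono (Iic_subset_Iic.2 h)
  have hsum : m univ * m univ ≤ (∫⁻ z, m (Iic z) ∂m) + ∫⁻ z, m (Ici z) ∂m := by
    rw [← lintegral_add_left hmi, ← lintegral_const]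
    refine lintegral_mono fun z => ?_
    rw [← Iic_union_Ici (a := z)]
    exact measure_union_le _ _
  have hswap : (∫⁻ z, m (Iic z) ∂m) = ∫⁻ z, m (Ici z) ∂m := by
    have hS : MeasurableSet {p : ℝ × ℝ | p.2 ≤ p.1} := measurableSet_le measurable_snd measurable_fst
    have e1 := Measure.prod_apply (μ := m) (ν := m) hS
    have e2 := Measure.prod_apply_symm (μ := m) (ν := m) hS
    exact e1.symm.trans e2
  constructor
  · rw [two_mul]; nth_rewrite 2 [hswap]; exact hsum
  · rw [two_mul]; nth_rewrite 1 [← hswap]; exact hsum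

lemma measure_Iic_rpow_le {m : Measure ℝ} {x k : ℝ} (hk : 0 < k) (hfin : m (Iic x) ≠ ⊤) :
    m (Iic x) ^ (k + 1) ≤ 4 ^ (k + 1) * ∫⁻ z in Iic x, m (Iic z) ^ k ∂m := by
  have : IsFiniteMeasure (m.restrict (Iic x)) := ⟨by simpa using hfin.lt_top⟩
  have := measure_univ_rpow_le (m := m.restrict (Iic x)) hk
    (v := fun z => m.restrict (Iic x) (Iic z))
    (Monotone.measurable fun x y h => measure_mono (Iic_subset_Iic.2 h))
    (measure_sq_le _).1 (fun z => measure_mono (subset_univ _))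
  rw [Measure.restrict_apply_univ] at this
  refine this.trans ?_
  gcongr
  exact Measure.restrict_le_self

lemma measure_Ici_rpow_le {m : Measure ℝ} {x k : ℝ} (hk : 0 < k) (hfin : m (Ici x) ≠ ⊤) :
    m (Ici x) ^ (k + 1) ≤ 4 ^ (k + 1) * ∫⁻ z in Ici x, m (Ici z) ^ k ∂m := by
  have : IsFiniteMeasure (m.restrict (Ici x)) := ⟨by simpa using hfin.lt_top⟩
  have := measure_univ_rpow_le (m := m.restrict (Ici x)) hk
    (v := fun z => m.restrict (Ici x) (Ici z))
    (Antitone.measurable fun x y h => measure_mono (Ici_subset_Ici.2 h))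
    (measure_sq_le _).2 (fun z => measure_mono (subset_univ _))
  rw [Measure.restrict_apply_univ] at this
  refine this.trans ?_
  gcongr
  exact Measure.restrict_le_self

/-! ### The Lebesgue–Stieltjes measure of a negative power of a tail function -/

/-- `L` is the Lebesgue–Stieltjes measure on `(a,b)` of the non-decreasing function
`x ↦ σ([x,b)) ^ (-γ)`, where `σ` lives on `(a,b)` and has finite tails. Both measures are taken on
all of `ℝ` and vanish outside `(a,b)`, so that `σ [x,b)` is `σ (Ici x)`. -/
structure LSPair (γ a b : ℝ) (σ L : Measure ℝ) : Prop where
  hγ : 0 < γ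
  hab : a < b
  fin : ∀ t ∈ Ioo a b, σ (Ici t) < ⊤
  σa : σ (Iic a) = 0
  σb : σ (Ici b) = 0
  La : L (Iic a) = 0
  Lb : L (Ici b) = 0
  L_Ico : ∀ α β, a < α → α ≤ β → β < b →
    L (Ico α β) = (σ (Ici β) ^ γ)⁻¹ - (σ (Ici α) ^ γ)⁻¹

lemma measure_univ_eq_Ioi {m : Measure ℝ} {a : ℝ} (h : m (Iic a) = 0) : m univ = m (Ioi a) := by
  refine le_antisymm ?_ (measure_mono (subset_univ _))
  calc m univ = m (Iic a ∪ Ioi a) := by rw [Iic_union_Ioi]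
    _ ≤ m (Iic a) + m (Ioi a) := measure_union_le _ _
    _ = m (Ioi a) := by rw [h, zero_add]

lemma measure_univ_le {m : Measure ℝ} {a b : ℝ} {c : ℝ≥0∞} (hab : a < b) (h : m (Iic a) = 0)
    (hc : ∀ t ∈ Ioo a b, m (Ici t) ≤ c) : m univ ≤ c := by
  rw [measure_univ_eq_Ioi h]
  exact measure_Ioi_le hab fun β h1 h2 => hc β ⟨h1, h2⟩

lemma sigmaFinite_of_tails {m : Measure ℝ} {a b : ℝ} (hab : a < b) (h : m (Iic a) = 0)
    (hc : ∀ t ∈ Ioo a b, m (Ici t) < ⊤) : SigmaFinite m := by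
  obtain ⟨u, hu, hmem, hlim⟩ := exists_seq_strictAnti_tendsto' hab
  refine Measure.sigmaFinite_of_countable (S := insert (Iic a) (range fun n => Ici (u n)))
    ((countable_range _).insert _) ?_ ?_
  · rintro s (rfl | ⟨n, rfl⟩)
    · rw [h]; exact ENNReal.zero_lt_top
    · exact hc _ (hmem n)
  · refine eq_univ_of_forall fun x => ?_
    rcases le_or_gt x a with hx | hx
    · exact ⟨Iic a, mem_insert _ _, hx⟩
    · obtain ⟨n, hn⟩ := (hlim.eventually (gt_mem_nhds hx)).exists
      exact ⟨Ici (u n), mem_insert_of_mem _ ⟨n, rfl⟩, le_of_lt hn⟩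

lemma ae_mem_Ioo {m : Measure ℝ} {a b : ℝ} (ha : m (Iic a) = 0) (hb : m (Ici b) = 0) :
    ∀ᵐ x ∂m, x ∈ Ioo a b := by
  have h1 : ∀ᵐ x ∂m, x ∉ Iic a := measure_eq_zero_iff_ae_notMem.1 ha
  have h2 : ∀ᵐ x ∂m, x ∉ Ici b := measure_eq_zero_iff_ae_notMem.1 hb
  filter_upwards [h1, h2] with x hx1 hx2
  exact ⟨not_le.1 hx1, not_le.1 hx2⟩

namespace LSPair

variable {γ a b : ℝ} {σ L : Measure ℝ}

lemma Iio_le (h : LSPair γ a b σ L) {β : ℝ} (hβ : β ∈ Ioo a b) :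
    L (Iio β) ≤ (σ (Ici β) ^ γ)⁻¹ := by
  have h1 : L (Iio β) ≤ L (Iic a) + L (Ioo a β) := by
    refine (measure_mono fun x hx => ?_).trans (measure_union_le _ _)
    rcases le_or_gt x a with hxa | hxa
    · exact Or.inl hxa
    · exact Or.inr ⟨hxa, hx⟩
  rw [h.La, zero_add] at h1
  refine h1.trans (measure_Ioo_le fun α h1 h2 => ?_)
  rw [h.L_Ico α β h1 h2.le hβ.2]
  exact tsub_le_self

lemma Iic_le (h : LSPair γ a b σ L) {t : ℝ} (ht : t ∈ Ioo a b) :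
    L (Iic t) ≤ (σ (Ioi t) ^ γ)⁻¹ := by
  rw [le_inv_rpow_iff h.hγ]
  refine measure_Ioi_le ht.2 fun β h1 h2 => ?_
  rw [← le_inv_rpow_iff h.hγ]
  exact (measure_mono fun x hx => lt_of_le_of_lt hx h1).trans (h.Iio_le ⟨ht.1.trans h1, h2⟩)

lemma exists_tail_pos (_h : LSPair γ a b σ L) {t : ℝ} (ht : t ∈ Ico a b) (h0 : σ (Ioi t) ≠ 0) :
    ∃ β ∈ Ioo t b, σ (Ici β) ≠ 0 := by
  by_contra! hc
  exact h0 (le_antisymm (measure_Ioi_le ht.2 fun β h1 h2 => (hc β ⟨h1, h2⟩).le) zero_le)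

lemma inv_le_add_Iio (h : LSPair γ a b σ L) {β : ℝ} (hβ : β ∈ Ioo a b) :
    (σ (Ici β) ^ γ)⁻¹ ≤ (σ univ ^ γ)⁻¹ + L (Iio β) := by
  rw [← tsub_le_iff_right, le_inv_rpow_iff h.hγ]
  refine measure_univ_le hβ.1 h.σa fun α hα => ?_
  rw [← le_inv_rpow_iff h.hγ, tsub_le_iff_right]
  have h1 := h.L_Ico α β hα.1 hα.2.le hβ.2
  have h2 : L (Ico α β) ≤ L (Iio β) := measure_mono fun x hx => hx.2
  calc (σ (Ici β) ^ γ)⁻¹ ≤ (σ (Ici α) ^ γ)⁻¹ + ((σ (Ici β) ^ γ)⁻¹ - (σ (Ici α) ^ γ)⁻¹) :=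
        le_add_tsub
    _ ≤ _ := by rw [← h1]; gcongr

lemma inv_le_add_Iic (h : LSPair γ a b σ L) {t : ℝ} (ht : t ∈ Ioo a b) (h0 : σ (Ioi t) ≠ 0) :
    (σ (Ioi t) ^ γ)⁻¹ ≤ (σ univ ^ γ)⁻¹ + L (Iic t) := by
  obtain ⟨β₀, hβ₀, hpos⟩ := h.exists_tail_pos ⟨ht.1.le, ht.2⟩ h0
  obtain ⟨u, hu, hmem, hlim⟩ := exists_seq_strictAnti_tendsto' hβ₀.1
  have hI : Iic t = ⋂ n, Iio (u n) := by
    ext x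
    simp only [mem_Iic, mem_iInter, mem_Iio]
    refine ⟨fun hx n => lt_of_le_of_lt hx (hmem n).1, fun hx => ?_⟩
    exact ge_of_tendsto' hlim fun n => (hx n).le
  have hmemI : ∀ n, u n ∈ Ioo a b := fun n =>
    ⟨ht.1.trans (hmem n).1, (hmem n).2.trans hβ₀.2⟩
  rw [hI, Antitone.measure_iInter (fun i j hij => Iio_subset_Iio (hu.antitone hij))
    (fun i => measurableSet_Iio.nullMeasurableSet), ENNReal.add_iInf]
  · refine le_iInf fun n => ?_
    refine le_trans ?_ (h.inv_le_add_Iio (hmemI n))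
    refine ENNReal.inv_le_inv.2 (ENNReal.rpow_le_rpow (measure_mono ?_) h.hγ.le)
    exact fun x hx => lt_of_lt_of_le (hmem n).1 hx
  · refine ⟨0, ne_top_of_le_ne_top ?_ (h.Iio_le (hmemI 0))⟩
    have : σ (Ici (u 0)) ≠ 0 := fun h' => hpos (le_antisymm
      ((measure_mono (Ici_subset_Ici.2 (hmem 0).2.le)).trans h'.le) zero_le)
    simp [ENNReal.rpow_eq_zero_iff, this, h.hγ.not_gt]

/-- The function `S ^ (-γ)` jumps to `∞` where the tail of `σ` vanishes, and then its
Lebesgue–Stieltjes measure is infinite up to and including that point. -/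
lemma Iic_eq_top (h : LSPair γ a b σ L) {t : ℝ} (ht : t ∈ Ioo a b) (h0 : σ (Ioi t) = 0)
    (hu : σ univ ≠ 0) : L (Iic t) = ⊤ := by
  have hz : ∀ x ∈ Ioo t b, σ (Ici x) = 0 := fun x hx =>
    measure_mono_null (fun y hy => lt_of_lt_of_le hx.1 hy) h0
  rw [measure_univ_eq_Ioi h.σa] at hu
  obtain ⟨α, hα, hpos⟩ := h.exists_tail_pos ⟨le_rfl, h.hab⟩ hu
  have hαt : α ≤ t := by
    by_contra! hc
    exact hpos (hz α ⟨hc, hα.2⟩)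
  obtain ⟨β, hβ⟩ := exists_between ht.2
  have h1 : L (Ico α β) = ⊤ := by
    rw [h.L_Ico α β hα.1 (hαt.trans hβ.1.le) hβ.2, hz β hβ, ENNReal.zero_rpow_of_pos h.hγ,
      ENNReal.inv_zero]
    refine ENNReal.top_sub ?_
    simp [ENNReal.rpow_eq_zero_iff, hpos, h.hγ.not_gt]
  have h2 : L (Ioo t β) ≤ 0 := by
    refine measure_Ioo_le fun α' h3 h4 => ?_
    rw [h.L_Ico α' β (ht.1.trans h3) h4.le hβ.2, hz β hβ, hz α' ⟨h3, h4.trans hβ.2⟩]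
    simp
  refine top_le_iff.1 ?_
  calc ⊤ = L (Ico α β) := h1.symm
    _ ≤ L (Iic t) + L (Ioo t β) := by
        refine (measure_mono fun x hx => ?_).trans (measure_union_le _ _)
        rcases le_or_gt x t with hxt | hxt
        · exact Or.inl hxt
        · exact Or.inr ⟨hxt, hx.2⟩
    _ = L (Iic t) := by rw [le_antisymm h2 zero_le, add_zero]

end LSPair

/-! ### The extremal function -/

lemma measurable_Ici (m : Measure ℝ) : Measurable fun z => m (Ici z) :=
  Antitone.measurable fun _ _ h => measure_mono (Ici_subset_Ici.2 h)

lemma measurable_Ioi (m : Measure ℝ) : Measurable fun z => m (Ioi z) :=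
  Antitone.measurable fun _ _ h => measure_mono (Ioi_subset_Ioi h)

/-- The integral of the extremal function against `σ`, by Tonelli's theorem. In the applications
`ρ` has density `τ (Ici z) ^ (γ + 1)` with respect to `L` or to a restriction of `L`. -/
lemma lintegral_extremal_le (σ ρ : Measure ℝ) [SFinite σ] [SFinite ρ] :
    ∫⁻ x, (∫⁻ z in Iio x, (σ (Ioi z))⁻¹ ∂ρ) ∂σ ≤ ρ univ := by
  have hm : Measurable fun z => (σ (Ioi z))⁻¹ := (measurable_Ioi σ).inv
  have hS : MeasurableSet {p : ℝ × ℝ | p.2 < p.1} := measurableSet_lt measurable_snd measurable_fst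
  calc ∫⁻ x, (∫⁻ z in Iio x, (σ (Ioi z))⁻¹ ∂ρ) ∂σ
      = ∫⁻ x, (∫⁻ z, {p : ℝ × ℝ | p.2 < p.1}.indicator (fun p => (σ (Ioi p.2))⁻¹) (x, z) ∂ρ) ∂σ := by
        refine lintegral_congr fun x => ?_
        rw [← lintegral_indicator measurableSet_Iio]
        rfl
    _ = ∫⁻ z, (∫⁻ x, {p : ℝ × ℝ | p.2 < p.1}.indicator (fun p => (σ (Ioi p.2))⁻¹) (x, z) ∂σ) ∂ρ := by
        refine lintegral_lintegral_swap (Measurable.aemeasurable ?_)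
        exact (hm.comp measurable_snd).indicator hS
    _ = ∫⁻ z, (σ (Ioi z))⁻¹ * σ (Ioi z) ∂ρ := by
        refine lintegral_congr fun z => ?_
        rw [← setLIntegral_const, ← lintegral_indicator measurableSet_Ioi]
        rfl
    _ ≤ ∫⁻ z, 1 ∂ρ := lintegral_mono fun z => ENNReal.inv_mul_le_one _
    _ = ρ univ := by simp

/-- Pointwise lower bound for the extremal function, where `m` is `L` or a restriction of `L`. -/
lemma extremal_ge {σ τ m : Measure ℝ} {γ x : ℝ} (hγ : 0 < γ) (hfin : m (Iic x) ≠ ⊤)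
    (hm : ∀ᵐ z ∂m, z ≤ x → m (Iic z) ≤ (σ (Ioi z) ^ γ)⁻¹) :
    τ (Ici x) ^ (γ + 1) * m (Iic x) ^ (γ⁻¹ + 1) ≤ 4 ^ (γ⁻¹ + 1) *
      ∫⁻ z in Iic x, (σ (Ioi z))⁻¹ ∂(m.withDensity fun z => τ (Ici z) ^ (γ + 1)) := by
  have hk : 0 < γ⁻¹ := inv_pos.2 hγ
  have hmi : Measurable fun z => (σ (Ioi z))⁻¹ := (measurable_Ioi σ).inv
  rw [setLIntegral_withDensity_eq_setLIntegral_mul _ ((measurable_Ici τ).pow_const _) hmi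
    measurableSet_Iic]
  calc τ (Ici x) ^ (γ + 1) * m (Iic x) ^ (γ⁻¹ + 1)
      ≤ τ (Ici x) ^ (γ + 1) * (4 ^ (γ⁻¹ + 1) * ∫⁻ z in Iic x, m (Iic z) ^ γ⁻¹ ∂m) := by
        gcongr
        exact measure_Iic_rpow_le hk hfin
    _ = 4 ^ (γ⁻¹ + 1) * ∫⁻ z in Iic x, τ (Ici x) ^ (γ + 1) * m (Iic z) ^ γ⁻¹ ∂m := by
        rw [lintegral_const_mul]
        · ring
        · exact (Monotone.measurable fun x y h => measure_mono (Iic_subset_Iic.2 h)).pow_const _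
    _ ≤ _ := by
        refine mul_le_mul_right ?_ _
        refine lintegral_mono_ae ?_
        rw [ae_restrict_iff' measurableSet_Iic]
        filter_upwards [hm] with z hz hzx
        simp only [Pi.mul_apply]
        gcongr
        · exact hzx
        · calc m (Iic z) ^ γ⁻¹ ≤ ((σ (Ioi z) ^ γ)⁻¹) ^ γ⁻¹ := by
                gcongr
                exact hz hzx
            _ = (σ (Ioi z))⁻¹ := by
                rw [ENNReal.inv_rpow, ← ENNReal.rpow_mul, mul_inv_cancel₀ hγ.ne', ENNReal.rpow_one]

/-! ### Sufficiency -/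

/-- The tails of `τ` are dominated by those of `A σ`, where `A ^ (γ + 1)` is a multiple of the
extremal function plus a constant. This domination is what replaces `τ` by a measure with a density that can be estimated by Hölder's
inequality. -/
lemma exists_dominating {γ a b : ℝ} {σ L τ : Measure ℝ} (h : LSPair γ a b σ L)
    {D : ℝ≥0∞} (hD : D ≠ ⊤)
    (hX : ∫⁻ x, τ (Ici x) ^ (γ + 1) ∂L ≤ D) (hY : τ univ ^ (γ + 1) * (σ univ ^ γ)⁻¹ ≤ D) :
    ∃ A : ℝ → ℝ≥0∞, Measurable A ∧ (∀ t ∈ Ioo a b, τ (Ici t) ≤ ∫⁻ x in Ioi t, A x ∂σ) ∧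
      ∫⁻ x, A x ^ (γ + 1) ∂σ ≤ 2 ^ γ⁻¹ * 4 ^ (γ⁻¹ + 1) * (2 * D) := by
  have hγ := h.hγ
  have hγ1 : 0 < γ + 1 := by linarith
  have hk : 0 < γ⁻¹ := inv_pos.2 hγ
  set C : ℝ≥0∞ := 2 ^ γ⁻¹ * 4 ^ (γ⁻¹ + 1) with hC
  set ρ : Measure ℝ := L.withDensity fun z => τ (Ici z) ^ (γ + 1) with hρ
  have hρu : ρ univ ≤ D := by
    rw [hρ, withDensity_apply _ MeasurableSet.univ, Measure.restrict_univ]; exact hX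
  have : IsFiniteMeasure ρ := ⟨hρu.trans_lt hD.lt_top⟩
  have : SigmaFinite σ := sigmaFinite_of_tails h.hab h.σa h.fin
  set K : ℝ≥0∞ := τ univ ^ (γ + 1) * (σ univ ^ (γ + 1))⁻¹ with hK
  set Ψ : ℝ → ℝ≥0∞ := fun x => C * (K + ∫⁻ z in Iio x, (σ (Ioi z))⁻¹ ∂ρ) with hΨ
  have hIm : Measurable fun x => ∫⁻ z in Iio x, (σ (Ioi z))⁻¹ ∂ρ :=
    Monotone.measurable fun x y hxy => lintegral_mono_set (Iio_subset_Iio hxy)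
  have hΨm : Measurable Ψ := (hIm.const_add K).const_mul _
  refine ⟨fun x => Ψ x ^ (γ + 1)⁻¹, hΨm.pow_const _, fun t ht => ?_, ?_⟩
  · rcases eq_or_ne (τ (Ici t)) 0 with hT | hT
    · rw [hT]; exact zero_le
    have hTp : τ (Ici t) ^ (γ + 1) ≠ 0 := by
      simp [ENNReal.rpow_eq_zero_iff, hT, hγ1.not_gt]
    have hτu : τ (Ici t) ≤ τ univ := measure_mono (subset_univ _)
    -- finiteness of the two quantities bounded by `D` excludes degenerate tails of `σ`
    have hσu : σ univ ≠ 0 := by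
      intro h0
      rw [h0, ENNReal.zero_rpow_of_pos hγ, ENNReal.inv_zero, ENNReal.mul_top] at hY
      · exact hD (top_le_iff.1 hY)
      · exact fun h' => hTp (le_antisymm ((ENNReal.rpow_le_rpow hτu hγ1.le).trans h'.le) zero_le)
    have hS0 : σ (Ioi t) ≠ 0 := by
      intro h0
      have h1 := h.Iic_eq_top ht h0 hσu
      have h2 : τ (Ici t) ^ (γ + 1) * L (Iic t) ≤ D := by
        refine le_trans ?_ hX
        rw [← setLIntegral_const]
        refine le_trans (setLIntegral_mono' measurableSet_Iic fun z hz => ?_)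
          (setLIntegral_le_lintegral _ _)
        exact ENNReal.rpow_le_rpow (measure_mono (Ici_subset_Ici.2 hz)) hγ1.le
      rw [h1, ENNReal.mul_top hTp] at h2
      exact hD (top_le_iff.1 h2)
    have hS_fin : σ (Ioi t) ≠ ⊤ :=
      ne_top_of_le_ne_top (h.fin t ht).ne (measure_mono Ioi_subset_Ici_self)
    have hLfin : L (Iic t) ≠ ⊤ := by
      refine ne_top_of_le_ne_top ?_ (h.Iic_le ht)
      simp [ENNReal.rpow_eq_zero_iff, hS0, hγ.not_gt]
    have hpt : (τ (Ici t) * (σ (Ioi t))⁻¹) ^ (γ + 1) ≤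
        C * (K + ∫⁻ z in Iic t, (σ (Ioi z))⁻¹ ∂ρ) := by
      have e1 : γ * (γ⁻¹ + 1) = γ + 1 := by
        rw [mul_add, mul_inv_cancel₀ hγ.ne', mul_one, add_comm]
      have e2 : ∀ s : ℝ≥0∞, ((s ^ γ)⁻¹) ^ (γ⁻¹ + 1) = (s ^ (γ + 1))⁻¹ := fun s => by
        rw [ENNReal.inv_rpow, ← ENNReal.rpow_mul, e1]
      have h1 := h.inv_le_add_Iic ht hS0
      have h2 : (σ (Ioi t) ^ (γ + 1))⁻¹ ≤
          2 ^ γ⁻¹ * ((σ univ ^ (γ + 1))⁻¹ + L (Iic t) ^ (γ⁻¹ + 1)) := by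
        rw [← e2, ← e2]
        refine (ENNReal.rpow_le_rpow h1 (by linarith)).trans ?_
        refine (ENNReal.rpow_add_le_mul_rpow_add_rpow _ _ (by linarith)).trans ?_
        rw [add_sub_cancel_right]
      have h3 := extremal_ge (τ := τ) (m := L) (σ := σ) hγ hLfin (by
        filter_upwards [ae_mem_Ioo h.La h.Lb] with z hz _
        exact h.Iic_le hz)
      have h4 : (1 : ℝ≥0∞) ≤ 4 ^ (γ⁻¹ + 1) :=
        ENNReal.one_le_rpow (by norm_num) (by linarith)
      calc (τ (Ici t) * (σ (Ioi t))⁻¹) ^ (γ + 1)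
          = τ (Ici t) ^ (γ + 1) * (σ (Ioi t) ^ (γ + 1))⁻¹ := by
            rw [ENNReal.mul_rpow_of_nonneg _ _ hγ1.le, ENNReal.inv_rpow]
        _ ≤ τ (Ici t) ^ (γ + 1) *
            (2 ^ γ⁻¹ * ((σ univ ^ (γ + 1))⁻¹ + L (Iic t) ^ (γ⁻¹ + 1))) := by gcongr
        _ = 2 ^ γ⁻¹ * (1 * (τ (Ici t) ^ (γ + 1) * (σ univ ^ (γ + 1))⁻¹) +
            τ (Ici t) ^ (γ + 1) * L (Iic t) ^ (γ⁻¹ + 1)) := by ring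
        _ ≤ 2 ^ γ⁻¹ * (4 ^ (γ⁻¹ + 1) * K +
            4 ^ (γ⁻¹ + 1) * ∫⁻ z in Iic t, (σ (Ioi z))⁻¹ ∂ρ) := by
            gcongr
            rw [hK]
            gcongr
        _ = C * (K + ∫⁻ z in Iic t, (σ (Ioi z))⁻¹ ∂ρ) := by rw [hC]; ring
    calc τ (Ici t) = τ (Ici t) * (σ (Ioi t))⁻¹ * σ (Ioi t) := by
          rw [mul_assoc, ENNReal.inv_mul_cancel hS0 hS_fin, mul_one]
      _ = ∫⁻ x in Ioi t, τ (Ici t) * (σ (Ioi t))⁻¹ ∂σ := by rw [setLIntegral_const]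
      _ ≤ _ := by
          refine setLIntegral_mono' measurableSet_Ioi fun x hx => ?_
          rw [ENNReal.le_rpow_inv_iff hγ1]
          refine hpt.trans ?_
          simp only [hΨ]
          gcongr
          exact mem_Ioi.1 hx
  · have hpow : ∀ x, (Ψ x ^ (γ + 1)⁻¹) ^ (γ + 1) = Ψ x := fun x => by
      rw [← ENNReal.rpow_mul, inv_mul_cancel₀ hγ1.ne', ENNReal.rpow_one]
    simp only [hpow]
    simp only [hΨ]
    rw [lintegral_const_mul _ (hIm.const_add K), lintegral_add_left measurable_const,
      lintegral_const, two_mul]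
    gcongr
    · refine le_trans ?_ hY
      rw [hK, mul_assoc]
      gcongr
      rcases eq_or_ne (σ univ) 0 with h0 | h0
      · simp [h0]
      rcases eq_or_ne (σ univ) ⊤ with h1 | h1
      · simp [h1, ENNReal.top_rpow_of_pos hγ1]
      · rw [ENNReal.rpow_add _ _ h0 h1, ENNReal.rpow_one, ENNReal.mul_inv (Or.inr h1) (Or.inr h0),
          mul_assoc, ENNReal.inv_mul_cancel h0 h1, mul_one]
    · exact (lintegral_extremal_le σ ρ).trans hρu

/-- The inequality for `G` a pointwise majorant of the essential supremum of `g` to the left of each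
point, with a constant comparable to `D ^ (1 / R)`. -/
lemma upper_core {P Q R γ a b : ℝ} (hP : 0 < P) (hPQ : P < Q) (hR : R⁻¹ = P⁻¹ - Q⁻¹)
    (hγR : γ = R / Q) {σ L τ : Measure ℝ} (h : LSPair γ a b σ L)
    (τa : τ (Iic a) = 0) (τb : τ (Ici b) = 0) {D : ℝ≥0∞} (hD : D ≠ ⊤)
    (hX : ∫⁻ x, τ (Ici x) ^ (γ + 1) ∂L ≤ D) (hY : τ univ ^ (γ + 1) * (σ univ ^ γ)⁻¹ ≤ D)
    {g G : ℝ → ℝ≥0∞} (hg : Measurable g) (hG : Measurable G)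
    (hgG : ∀ x ∈ Ioo a b, τ ({z | G x < g z} ∩ Iio x) = 0) :
    (∫⁻ x, g x ^ P ∂τ) ^ (1 / P) ≤
      (2 ^ γ⁻¹ * 4 ^ (γ⁻¹ + 1) * (2 * D)) ^ (1 / R) * (∫⁻ x, G x ^ Q ∂σ) ^ (1 / Q) := by
  have hγ := h.hγ
  have hQ : 0 < Q := hP.trans hPQ
  have hRpos : 0 < R := by
    rw [hγR] at hγ
    exact (div_pos_iff_of_pos_right hQ).1 hγ
  have hγ1 : γ + 1 = R / P := by
    rw [hγR]
    field_simp at hR ⊢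
    linarith
  obtain ⟨A, hA, hdom, hAint⟩ := exists_dominating h hD hX hY
  have hdom' : ∀ t : ℝ, τ (Ici t) ≤ ∫⁻ x in Ioi t, A x ∂σ := by
    intro t
    rcases le_or_gt t a with hta | hta
    · refine (measure_mono (subset_univ _)).trans (measure_univ_le h.hab τa fun x hx => ?_)
      exact (hdom x hx).trans (lintegral_mono_set (Ioi_subset_Ioi (hta.trans hx.1.le)))
    · rcases lt_or_ge t b with htb | htb
      · exact hdom t ⟨hta, htb⟩
      · rw [measure_mono_null (Ici_subset_Ici.2 htb) τb]; exact zero_le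
  have hlevel : ∀ y : ℝ≥0∞, τ {x | y < g x} ≤ (σ.withDensity A) {x | y < G x} := by
    intro y
    have hGy : MeasurableSet {x | y < G x} := measurableSet_lt measurable_const hG
    rw [withDensity_apply _ hGy]
    -- it suffices to find `t` such that `g ≤ y` a.e. to the left of `t` and `G > y` to its right
    have hmain : ∀ t : ℝ, τ ({x | y < g x} ∩ Iio t) = 0 →
        (∀ x ∈ Ioo a b, t < x → y < G x) → τ {x | y < g x} ≤ ∫⁻ x in {x | y < G x}, A x ∂σ := by
      intro t h1 h2
      calc τ {x | y < g x} ≤ τ ({x | y < g x} ∩ Iio t) + τ (Ici t) := by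
            refine (measure_mono fun x hx => ?_).trans (measure_union_le _ _)
            rcases lt_or_ge x t with hxt | hxt
            · exact Or.inl ⟨hx, hxt⟩
            · exact Or.inr hxt
        _ = τ (Ici t) := by rw [h1, zero_add]
        _ ≤ ∫⁻ x in Ioi t, A x ∂σ := hdom' t
        _ ≤ _ := by
            refine lintegral_mono' ?_ le_rfl
            refine Measure.restrict_mono_ae ?_
            filter_upwards [ae_mem_Ioo h.σa h.σb] with x hx hxt
            exact h2 x hx hxt
    set U : Set ℝ := {x | x ∈ Ioo a b ∧ G x ≤ y} with hU
    rcases U.eq_empty_or_nonempty with hUe | hUne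
    · refine hmain a (measure_mono_null (inter_subset_right.trans Iio_subset_Iic_self) τa) fun x hx _ => ?_
      by_contra! hc
      exact (hUe ▸ (⟨hx, hc⟩ : x ∈ U) : x ∈ (∅ : Set ℝ))
    · have hbdd : BddAbove U := ⟨b, fun x hx => hx.1.2.le⟩
      obtain ⟨u, -, hlim, hmem⟩ := exists_seq_tendsto_sSup hUne hbdd
      refine hmain (sSup U) ?_ fun x hx hxt => ?_
      · refine measure_mono_null (t := ⋃ n, {z | G (u n) < g z} ∩ Iio (u n)) ?_
          (measure_iUnion_null fun n => hgG _ (hmem n).1)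
        rintro x ⟨hx1, hx2⟩
        obtain ⟨n, hn⟩ := (hlim.eventually (lt_mem_nhds hx2)).exists
        exact mem_iUnion.2 ⟨n, lt_of_le_of_lt (hmem n).2 hx1, hn⟩
      · by_contra! hc
        exact absurd (le_csSup hbdd (⟨hx, hc⟩ : x ∈ U)) (not_le.2 hxt)
  have hlayer : ∫⁻ x, g x ^ P ∂τ ≤ ∫⁻ x, G x ^ P ∂(σ.withDensity A) := by
    refine lintegral_le_of_meas_lt (hg.pow_const _) (hG.pow_const _) fun y => ?_
    have e : ∀ z : ℝ≥0∞, (y : ℝ≥0∞) < z ^ P ↔ (y : ℝ≥0∞) ^ P⁻¹ < z := fun z => by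
      rw [← not_le, ← not_le, ENNReal.le_rpow_inv_iff hP]
    simp only [e]
    exact hlevel _
  have hconj : (Q / P).HolderConjugate (γ + 1) := by
    rw [Real.holderConjugate_iff]
    refine ⟨(one_lt_div hP).2 hPQ, ?_⟩
    rw [hγ1]
    field_simp at hR ⊢
    linarith
  have hhold := ENNReal.lintegral_mul_le_Lp_mul_Lq σ hconj (f := fun x => G x ^ P) (g := A)
    (hG.pow_const _).aemeasurable hA.aemeasurable
  have e1 : ∀ x, (G x ^ P) ^ (Q / P) = G x ^ Q := fun x => by
    rw [← ENNReal.rpow_mul, mul_div_cancel₀ _ hP.ne']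
  simp only [e1] at hhold
  rw [lintegral_withDensity_eq_lintegral_mul _ hA (hG.pow_const _), mul_comm A] at hlayer
  calc (∫⁻ x, g x ^ P ∂τ) ^ (1 / P)
      ≤ ((∫⁻ x, G x ^ Q ∂σ) ^ (1 / (Q / P)) *
          (2 ^ γ⁻¹ * 4 ^ (γ⁻¹ + 1) * (2 * D)) ^ (1 / (γ + 1))) ^ (1 / P) := by
        refine ENNReal.rpow_le_rpow ?_ (by positivity)
        refine (hlayer.trans hhold).trans ?_
        refine mul_le_mul_right (ENNReal.rpow_le_rpow hAint ?_) _
        rw [hγ1]; positivity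
    _ = _ := by
        rw [ENNReal.mul_rpow_of_nonneg _ _ (by positivity), ← ENNReal.rpow_mul,
          ← ENNReal.rpow_mul, mul_comm, hγ1]
        congr 2 <;> field_simp

/-! ### Necessity -/

section Necessity

variable {P Q R γ a b : ℝ} {σ L τ : Measure ℝ} {c : ℝ≥0∞}

/-- The inequality tested with `g = 1`. In this and the following lemmas the essential supremum is
replaced by an arbitrary pointwise majorant `G` of `g` to the left of each point. -/
lemma lower_first (hP : 0 < P) (hPQ : P < Q)
    (H : ∀ g G : ℝ → ℝ≥0∞, Measurable g → (∀ z x, z < x → g z ≤ G x) →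
      (∫⁻ x, g x ^ P ∂τ) ^ (1 / P) ≤ c * (∫⁻ x, G x ^ Q ∂σ) ^ (1 / Q)) :
    τ univ ^ (1 / P) * (σ univ ^ (1 / Q))⁻¹ ≤ c := by
  have hQ : 0 < Q := hP.trans hPQ
  have h1 := H (fun _ => 1) (fun _ => 1) measurable_const fun _ _ _ => le_rfl
  simp only [ENNReal.one_rpow, lintegral_const, one_mul] at h1
  rcases eq_or_ne (σ univ) 0 with h0 | h0
  · rw [h0, ENNReal.zero_rpow_of_pos (by positivity), mul_zero] at h1
    rw [le_antisymm h1 zero_le, zero_mul]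
    exact zero_le
  rcases eq_or_ne (σ univ) ⊤ with ht | ht
  · rw [ht, ENNReal.top_rpow_of_pos (by positivity), ENNReal.inv_top, mul_zero]
    exact zero_le
  rwa [ENNReal.mul_inv_le_iff (by simp [h0, ht])
    (ENNReal.rpow_ne_top_of_nonneg (by positivity) ht)]

/-- The inequality tested with the indicator function of `[t,b)`. -/
lemma lower_tail (hP : 0 < P) (hPQ : P < Q)
    (H : ∀ g G : ℝ → ℝ≥0∞, Measurable g → (∀ z x, z < x → g z ≤ G x) →
      (∫⁻ x, g x ^ P ∂τ) ^ (1 / P) ≤ c * (∫⁻ x, G x ^ Q ∂σ) ^ (1 / Q)) (t : ℝ) :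
    τ (Ici t) ^ (1 / P) ≤ c * σ (Ioi t) ^ (1 / Q) := by
  have hQ : 0 < Q := hP.trans hPQ
  have h1 := H ((Ici t).indicator 1) ((Ioi t).indicator 1)
    (measurable_one.indicator measurableSet_Ici) (by
      intro z x hzx
      by_cases hz : z ∈ Ici t
      · have hx : x ∈ Ioi t := lt_of_le_of_lt hz hzx
        simp [hz, hx]
      · simp [hz])
  have e : ∀ (E : Set ℝ) (s : ℝ), 0 < s → ∀ x, (E.indicator (1 : ℝ → ℝ≥0∞) x) ^ s =
      E.indicator (1 : ℝ → ℝ≥0∞) x := by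
    intro E s hs x
    by_cases hx : x ∈ E <;> simp [hx, hs]
  simpa only [e _ _ hP, e _ _ hQ, lintegral_indicator_one measurableSet_Ici,
    lintegral_indicator_one measurableSet_Ioi] using h1

/-- The test function is the extremal function of the truncated measure `L.restrict (Ico α β)`,
raised to the power `1 / Q`; truncation makes the integral finite, so that it can be divided out. -/
lemma lower_trunc (hP : 0 < P) (hPQ : P < Q) (hR : R⁻¹ = P⁻¹ - Q⁻¹)
    (hγR : γ = R / Q) (h : LSPair γ a b σ L) (τa : τ (Iic a) = 0) (hc : c ≠ ⊤)
    (H : ∀ g G : ℝ → ℝ≥0∞, Measurable g → (∀ z x, z < x → g z ≤ G x) →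
      (∫⁻ x, g x ^ P ∂τ) ^ (1 / P) ≤ c * (∫⁻ x, G x ^ Q ∂σ) ^ (1 / Q))
    {α β : ℝ} (hα : a < α) (hαβ : α ≤ β) (hβ : β < b) (hpos : σ (Ici β) ≠ 0) :
    ∫⁻ x in Ico α β, τ (Ici x) ^ (γ + 1) ∂L ≤ (4 ^ ((γ + 2) / P) * c) ^ R := by
  have hγ := h.hγ
  have hQ : 0 < Q := hP.trans hPQ
  have hRpos : 0 < R := by
    rw [hγR] at hγ
    exact (div_pos_iff_of_pos_right hQ).1 hγ
  have hγ1 : γ + 1 = R / P := by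
    rw [hγR]
    field_simp at hR ⊢
    linarith
  have hPQR : P / Q + P / R = 1 := by
    field_simp at hR ⊢
    linarith
  have hTfin : ∀ t ∈ Ioo a b, τ (Ici t) < ⊤ := by
    intro t ht
    have h1 := lower_tail hP hPQ H t
    have h2 : σ (Ioi t) ≠ ⊤ :=
      ne_top_of_le_ne_top (h.fin t ht).ne (measure_mono Ioi_subset_Ici_self)
    have h3 : τ (Ici t) ^ (1 / P) < ⊤ :=
      h1.trans_lt (ENNReal.mul_lt_top hc.lt_top (ENNReal.rpow_lt_top_of_nonneg (by positivity) h2))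
    exact (ENNReal.rpow_lt_top_iff_of_pos (by positivity)).1 h3
  have : SigmaFinite σ := sigmaFinite_of_tails h.hab h.σa h.fin
  have : SigmaFinite τ := sigmaFinite_of_tails h.hab τa hTfin
  set L' := L.restrict (Ico α β) with hL'
  have hL'fin : L' univ < ⊤ := by
    rw [hL', Measure.restrict_apply_univ, h.L_Ico α β hα hαβ hβ]
    refine lt_of_le_of_lt tsub_le_self ?_
    simp [ENNReal.rpow_eq_zero_iff, hpos, hγ.not_gt, lt_top_iff_ne_top]
  have : IsFiniteMeasure L' := ⟨hL'fin⟩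
  set ρ : Measure ℝ := L'.withDensity fun z => τ (Ici z) ^ (γ + 1) with hρ
  set X := ∫⁻ x, τ (Ici x) ^ (γ + 1) ∂L' with hXdef
  have hρu : ρ univ = X := by
    rw [hρ, withDensity_apply _ MeasurableSet.univ, Measure.restrict_univ]
  have hXfin : X ≠ ⊤ := by
    have hle : X ≤ τ (Ici α) ^ (γ + 1) * L (Ico α β) := by
      rw [← setLIntegral_const]
      exact setLIntegral_mono' measurableSet_Ico fun z hz =>
        ENNReal.rpow_le_rpow (measure_mono (Ici_subset_Ici.2 hz.1)) (by linarith)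
    refine ne_top_of_le_ne_top (ENNReal.mul_ne_top ?_ ?_) hle
    · exact ENNReal.rpow_ne_top_of_nonneg (by linarith) (hTfin α ⟨hα, hαβ.trans_lt hβ⟩).ne
    · rw [hL', Measure.restrict_apply_univ] at hL'fin
      exact hL'fin.ne
  set I : ℝ → ℝ≥0∞ := fun x => ∫⁻ z in Iic x, (σ (Ioi z))⁻¹ ∂ρ with hI
  have hIm : Measurable I :=
    Monotone.measurable fun x y hxy => lintegral_mono_set (Iic_subset_Iic.2 hxy)
  have hpow : ∀ y : ℝ≥0∞, (y ^ (1 / Q)) ^ Q = y := fun y => by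
    rw [← ENNReal.rpow_mul, one_div_mul_cancel hQ.ne', ENNReal.rpow_one]
  have htest := H (fun x => I x ^ (1 / Q))
    (fun x => (∫⁻ z in Iio x, (σ (Ioi z))⁻¹ ∂ρ) ^ (1 / Q)) (hIm.pow_const _) (by
      intro z x hzx
      exact ENNReal.rpow_le_rpow (lintegral_mono_set (Iic_subset_Iio.2 hzx)) (by positivity))
  simp only [hpow] at htest
  have hpt : ∀ x, τ (Ici x) ^ γ * L' (Iic x) ≤ 4 * (I x ^ (1 / Q)) ^ P := by
    intro x
    have h1 := extremal_ge (τ := τ) (m := L') (σ := σ) (x := x) hγ (measure_ne_top _ _) (by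
      have h2 : ∀ᵐ z ∂L', z ∈ Ioo a b := ae_restrict_of_ae (ae_mem_Ioo h.La h.Lb)
      filter_upwards [h2] with z hz _
      exact (Measure.restrict_apply_le _ _).trans (h.Iic_le hz))
    have h2 := ENNReal.rpow_le_rpow h1 (by positivity : 0 ≤ P / Q)
    have e1 : (γ + 1) * (P / Q) = γ := by
      rw [hγ1, hγR]; field_simp
    have e2 : (γ⁻¹ + 1) * (P / Q) = 1 := by
      have : (γ⁻¹ + 1) = (γ + 1) / γ := by field_simp; ring
      rw [this, div_mul_eq_mul_div, e1, div_self hγ.ne']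
    rw [ENNReal.mul_rpow_of_nonneg _ _ (by positivity), ENNReal.mul_rpow_of_nonneg _ _ (by positivity),
      ← ENNReal.rpow_mul, ← ENNReal.rpow_mul, ← ENNReal.rpow_mul, e1, e2, ENNReal.rpow_one,
      ENNReal.rpow_one] at h2
    rw [← ENNReal.rpow_mul, one_div_mul_eq_div]
    exact h2
  have hτX : X ≤ 4 ^ (γ + 2) * ∫⁻ x, (I x ^ (1 / Q)) ^ P ∂τ := by
    have hS : MeasurableSet {p : ℝ × ℝ | p.1 ≤ p.2} := measurableSet_le measurable_fst measurable_snd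
    have hTm : Measurable fun x => τ (Ici x) ^ γ := (measurable_Ici τ).pow_const _
    have hinner : Measurable fun z => ∫⁻ x in Ici z, τ (Ici x) ^ γ ∂τ :=
      Antitone.measurable fun x y hxy => lintegral_mono_set (Ici_subset_Ici.2 hxy)
    calc X ≤ ∫⁻ z, 4 ^ (γ + 1) * ∫⁻ x in Ici z, τ (Ici x) ^ γ ∂τ ∂L' := by
          refine lintegral_mono_ae ?_
          have h2 : ∀ᵐ z ∂L', z ∈ Ioo a b := ae_restrict_of_ae (ae_mem_Ioo h.La h.Lb)
          filter_upwards [h2] with z hz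
          exact measure_Ici_rpow_le hγ (hTfin z hz).ne
      _ = 4 ^ (γ + 1) * ∫⁻ z, ∫⁻ x,
            {p : ℝ × ℝ | p.1 ≤ p.2}.indicator (fun p => τ (Ici p.2) ^ γ) (z, x) ∂τ ∂L' := by
          rw [lintegral_const_mul _ hinner]
          congr 1
          refine lintegral_congr fun z => ?_
          rw [← lintegral_indicator measurableSet_Ici]
          rfl
      _ = 4 ^ (γ + 1) * ∫⁻ x, ∫⁻ z,
            {p : ℝ × ℝ | p.1 ≤ p.2}.indicator (fun p => τ (Ici p.2) ^ γ) (z, x) ∂L' ∂τ := by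
          congr 1
          refine lintegral_lintegral_swap (Measurable.aemeasurable ?_)
          exact (hTm.comp measurable_snd).indicator hS
      _ = 4 ^ (γ + 1) * ∫⁻ x, τ (Ici x) ^ γ * L' (Iic x) ∂τ := by
          congr 1
          refine lintegral_congr fun x => ?_
          rw [← setLIntegral_const, ← lintegral_indicator measurableSet_Iic]
          rfl
      _ ≤ 4 ^ (γ + 1) * ∫⁻ x, 4 * (I x ^ (1 / Q)) ^ P ∂τ := by
          exact mul_le_mul_right (lintegral_mono hpt) _
      _ = 4 ^ (γ + 2) * ∫⁻ x, (I x ^ (1 / Q)) ^ P ∂τ := by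
          rw [lintegral_const_mul _ ((hIm.pow_const _).pow_const _), ← mul_assoc,
            show γ + 2 = (γ + 1) + 1 by ring,
            ENNReal.rpow_add_of_nonneg (γ + 1) 1 (by linarith) zero_le_one, ENNReal.rpow_one]
  have hσX : ∫⁻ x, (∫⁻ z in Iio x, (σ (Ioi z))⁻¹ ∂ρ) ∂σ ≤ X :=
    (lintegral_extremal_le σ ρ).trans hρu.le
  have hmain : X ^ (1 / P) ≤ 4 ^ ((γ + 2) / P) * c * X ^ (1 / Q) := by
    calc X ^ (1 / P) ≤ (4 ^ (γ + 2) * ∫⁻ x, (I x ^ (1 / Q)) ^ P ∂τ) ^ (1 / P) :=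
          ENNReal.rpow_le_rpow hτX (by positivity)
      _ = 4 ^ ((γ + 2) / P) * (∫⁻ x, (I x ^ (1 / Q)) ^ P ∂τ) ^ (1 / P) := by
          rw [ENNReal.mul_rpow_of_nonneg _ _ (by positivity), ← ENNReal.rpow_mul, mul_one_div]
      _ ≤ 4 ^ ((γ + 2) / P) * (c * X ^ (1 / Q)) := by
          gcongr
          refine htest.trans ?_
          gcongr
      _ = _ := by ring
  rcases eq_or_ne X 0 with hX0 | hX0
  · rw [hX0]; exact zero_le
  have hXQ0 : X ^ (1 / Q) ≠ 0 := by simp [hX0, hXfin]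
  have hXQt : X ^ (1 / Q) ≠ ⊤ := ENNReal.rpow_ne_top_of_nonneg (by positivity) hXfin
  have hfinal : X ^ R⁻¹ ≤ 4 ^ ((γ + 2) / P) * c := by
    rw [← ENNReal.mul_le_mul_iff_left hXQ0 hXQt]
    refine le_trans (le_of_eq ?_) hmain
    rw [← ENNReal.rpow_add _ _ hX0 hXfin, hR]
    congr 1
    ring
  calc X = (X ^ R⁻¹) ^ R := by
        rw [← ENNReal.rpow_mul, inv_mul_cancel₀ hRpos.ne', ENNReal.rpow_one]
    _ ≤ _ := ENNReal.rpow_le_rpow hfinal hRpos.le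

lemma lower_second (hP : 0 < P) (hPQ : P < Q) (hR : R⁻¹ = P⁻¹ - Q⁻¹)
    (hγR : γ = R / Q) (h : LSPair γ a b σ L) (τa : τ (Iic a) = 0) (hc : c ≠ ⊤)
    (H : ∀ g G : ℝ → ℝ≥0∞, Measurable g → (∀ z x, z < x → g z ≤ G x) →
      (∫⁻ x, g x ^ P ∂τ) ^ (1 / P) ≤ c * (∫⁻ x, G x ^ Q ∂σ) ^ (1 / Q)) :
    ∫⁻ x, τ (Ici x) ^ (γ + 1) ∂L ≤ (4 ^ ((γ + 2) / P) * c) ^ R := by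
  have hQ : 0 < Q := hP.trans hPQ
  have hγ1 : 0 < γ + 1 := by linarith [h.hγ]
  -- rational endpoints make the exhaustion countable
  let ι := {i : ℚ × ℚ // a < i.1 ∧ (i.1 : ℝ) ≤ i.2 ∧ (i.2 : ℝ) < b ∧ σ (Ici (i.2 : ℝ)) ≠ 0}
  let E : ι → Set ℝ := fun i => Ico (i.1.1 : ℝ) (i.1.2 : ℝ)
  have hdir : Directed (fun x1 x2 => x1 ⊆ x2) E := by
    rintro ⟨⟨α, β⟩, h1, h2, h3, h4⟩ ⟨⟨α', β'⟩, h1', h2', h3', h4'⟩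
    refine ⟨⟨(min α α', max β β'), ?_, ?_, ?_, ?_⟩, ?_, ?_⟩
    · simpa using ⟨h1, h1'⟩
    · simp only [Rat.cast_min, Rat.cast_max]
      exact (min_le_left _ _).trans (h2.trans (le_max_left _ _))
    · simpa using ⟨h3, h3'⟩
    · simp only [Rat.cast_max]
      rcases max_choice (β : ℝ) (β' : ℝ) with e | e <;> rw [e] <;> assumption
    · simp only [E, Rat.cast_min, Rat.cast_max]
      exact Ico_subset_Ico (min_le_left _ _) (le_max_left _ _)
    · simp only [E, Rat.cast_min, Rat.cast_max]
      exact Ico_subset_Ico (min_le_right _ _) (le_max_right _ _)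
  have hEm : MeasurableSet (⋃ i, E i) := MeasurableSet.iUnion fun i => measurableSet_Ico
  calc ∫⁻ x, τ (Ici x) ^ (γ + 1) ∂L ≤ ∫⁻ x in ⋃ i, E i, τ (Ici x) ^ (γ + 1) ∂L := by
        rw [← lintegral_indicator hEm]
        refine lintegral_mono_ae ?_
        filter_upwards [ae_mem_Ioo h.La h.Lb] with z hz
        by_cases hzE : z ∈ ⋃ i, E i
        · simp [indicator_of_mem hzE]
        -- outside the union the tail of `σ` vanishes, hence so does that of `τ`
        have h0 : σ (Ioi z) = 0 := by
          by_contra h0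
          obtain ⟨β, hβ, hpos⟩ := h.exists_tail_pos ⟨hz.1.le, hz.2⟩ h0
          obtain ⟨α', h1, h2⟩ := exists_rat_btwn hz.1
          obtain ⟨β', h3, h4⟩ := exists_rat_btwn hβ.1
          refine hzE (mem_iUnion.2 ⟨⟨(α', β'), h1, (h2.trans h3).le, h4.trans hβ.2, ?_⟩, h2.le, h3⟩)
          exact fun h5 => hpos (measure_mono_null (Ici_subset_Ici.2 h4.le) h5)
        have h1 := lower_tail hP hPQ H z
        rw [h0, ENNReal.zero_rpow_of_pos (by positivity), mul_zero] at h1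
        have h2 : τ (Ici z) = 0 :=
          (ENNReal.rpow_eq_zero_iff_of_pos (by positivity)).1 (le_antisymm h1 zero_le)
        rw [h2, ENNReal.zero_rpow_of_pos hγ1]
        exact zero_le
    _ ≤ _ := by
        rw [setLIntegral_iUnion_of_directed _ hdir]
        exact iSup_le fun i => lower_trunc hP hPQ hR hγR h τa hc H i.2.1 i.2.2.1 i.2.2.2.1 i.2.2.2.2

end Necessity

/-! ### Reduction of the inequality to the measures `w ^ p μ` and `u ^ q ν` -/

lemma eSup_null (μ : Measure ℝ) (E : Set ℝ) (g : ℝ → ℝ≥0∞) :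
    μ {z | z ∈ E ∧ eSup μ E g < g z} = 0 := by
  rcases eq_or_ne (eSup μ E g) ⊤ with h | h
  · simp [h]
  obtain ⟨u, -, hmem, hlim⟩ := exists_seq_strictAnti_tendsto' h.lt_top
  refine measure_mono_null (t := ⋃ n, {z | z ∈ E ∧ u n ≤ g z}) ?_ (measure_iUnion_null fun n => ?_)
  · rintro z ⟨hz, hlt⟩
    obtain ⟨n, hn⟩ := (hlim.eventually (gt_mem_nhds hlt)).exists
    exact mem_iUnion.2 ⟨n, hz, hn.le⟩
  · by_contra hne
    exact absurd (le_sSup (pos_iff_ne_zero.2 hne) : u n ≤ eSup μ E g) (not_le.2 (hmem n).1)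

lemma eSup_le {μ : Measure ℝ} {E : Set ℝ} {g : ℝ → ℝ≥0∞} {c : ℝ≥0∞} (h : ∀ z ∈ E, g z ≤ c) :
    eSup μ E g ≤ c := by
  refine sSup_le fun α hα => ?_
  obtain ⟨z, hz, hαz⟩ := nonempty_of_measure_ne_zero (ne_of_gt hα)
  exact hαz.trans (h z hz)

lemma eSup_monotone (μ : Measure ℝ) (a : ℝ) (g : ℝ → ℝ≥0∞) :
    Monotone fun x => eSup μ (Ioo a x) g := by
  intro x y hxy
  refine sSup_le_sSup fun α (hα : 0 < _) => lt_of_lt_of_le hα (measure_mono ?_)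
  exact fun z hz => ⟨⟨hz.1.1, hz.1.2.trans_le hxy⟩, hz.2⟩

/-- The measure `f m` on `(a,b)`, extended by zero. -/
def densOn (a b : ℝ) (m : Measure ℝ) (f : ℝ → ℝ≥0∞) : Measure ℝ :=
  (m.restrict (Ioo a b)).withDensity f

lemma densOn_Ici {a b x : ℝ} (hx : a < x) (m : Measure ℝ) (f : ℝ → ℝ≥0∞) :
    densOn a b m f (Ici x) = ∫⁻ z in Ico x b, f z ∂m := by
  rw [densOn, withDensity_apply _ measurableSet_Ici, Measure.restrict_restrict measurableSet_Ici]
  congr 2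
  ext z
  simp only [mem_inter_iff, mem_Ici, mem_Ioo, mem_Ico]
  exact ⟨fun h => ⟨h.1, h.2.2⟩, fun h => ⟨h.1, hx.trans_le h.1, h.2⟩⟩

lemma densOn_univ {a b : ℝ} (m : Measure ℝ) (f : ℝ → ℝ≥0∞) :
    densOn a b m f univ = ∫⁻ z in Ioo a b, f z ∂m := by
  rw [densOn, withDensity_apply _ MeasurableSet.univ, Measure.restrict_univ]

lemma restrict_Ioo_Iic (a b : ℝ) (m : Measure ℝ) : m.restrict (Ioo a b) (Iic a) = 0 := by
  rw [Measure.restrict_apply measurableSet_Iic]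
  refine measure_mono_null (t := ∅) ?_ measure_empty
  rintro z ⟨h1, h2⟩
  exact absurd h2.1 (not_lt.2 h1)

lemma restrict_Ioo_Ici (a b : ℝ) (m : Measure ℝ) : m.restrict (Ioo a b) (Ici b) = 0 := by
  rw [Measure.restrict_apply measurableSet_Ici]
  refine measure_mono_null (t := ∅) ?_ measure_empty
  rintro z ⟨h1, h2⟩
  exact absurd h2.2 (not_lt.2 h1)

lemma densOn_Iic_left (a b : ℝ) (m : Measure ℝ) (f : ℝ → ℝ≥0∞) : densOn a b m f (Iic a) = 0 :=
  withDensity_absolutelyContinuous _ _ (restrict_Ioo_Iic a b m)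

lemma densOn_Ici_right (a b : ℝ) (m : Measure ℝ) (f : ℝ → ℝ≥0∞) : densOn a b m f (Ici b) = 0 :=
  withDensity_absolutelyContinuous _ _ (restrict_Ioo_Ici a b m)

lemma lintegral_densOn (a b : ℝ) (m : Measure ℝ) {f g : ℝ → ℝ≥0∞} (hf : Measurable f)
    (hg : Measurable g) {s : ℝ} (hs : 0 ≤ s) :
    ∫⁻ x, g x ^ s ∂(densOn a b m fun x => f x ^ s) = ∫⁻ x in Ioo a b, (f x * g x) ^ s ∂m := by
  rw [densOn, lintegral_withDensity_eq_lintegral_mul _ (hf.pow_const _) (hg.pow_const _)]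
  refine lintegral_congr fun x => ?_
  rw [ENNReal.mul_rpow_of_nonneg _ _ hs, Pi.mul_apply]

/-- Theorem 4.1 (ii): for `0 < p < q < ∞` and `1/r = 1/p - 1/q`, the inequality
`‖gw‖_{p,(a,b),μ} ≤ c ‖u(x) ‖g‖_{∞,(a,x),μ}‖_{q,(a,b),ν}` holds for all `g ∈ B⁺((a,b))`
iff `B₂ = (∫_{(a,b)} ‖w‖_{p,[x,b),μ}^r d(‖u‖_{q,[x,b),ν}^{-r}))^{1/r}
+ ‖w‖_{p,(a,b),μ} ‖u‖_{q,(a,b),ν}⁻¹ < ∞`, where the Lebesgue–Stieltjes measure `lam`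
of the non-decreasing left-continuous function `x ↦ ‖u‖_{q,[x,b),ν}^{-r}` is determined
by `lam([α,β)) = ‖u‖_{q,[β,b),ν}^{-r} - ‖u‖_{q,[α,b),ν}^{-r}`.  Moreover the best
constant satisfies `c ≈ B₂` with constants depending only on `p` and `q`. -/
theorem statement9 (p q r : ℝ≥0∞) (hp : 0 < p) (hpq : p < q) (hq : q < ⊤)
    (hr : r⁻¹ = p⁻¹ - q⁻¹) :
    ∃ C₁ C₂ : ℝ≥0∞, 0 < C₁ ∧ C₂ < ⊤ ∧
      ∀ (a b : ℝ), a < b →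
      ∀ (μ ν : Measure ℝ) (w u : ℝ → ℝ≥0∞),
        Measurable w → Measurable u →
        (∀ t ∈ Ioo a b, Nrm q ν (Ico t b) u < ⊤) →
        (∀ᵐ x ∂ν.restrict (Ioo a b), u x ≠ 0) →
        ∀ lam : Measure ℝ,
        (∀ α β : ℝ, a < α → α ≤ β → β < b →
            lam (Ico α β) =
              (Nrm q ν (Ico β b) u ^ r.toReal)⁻¹ - (Nrm q ν (Ico α b) u ^ r.toReal)⁻¹) →
        ((∃ c : ℝ≥0∞, 0 < c ∧ c < ⊤ ∧ ∀ g : ℝ → ℝ≥0∞, Measurable g →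
            Nrm p μ (Ioo a b) (fun t => g t * w t) ≤ c * RHSdual q a b μ ν u g) ↔
          (∫⁻ x in Ioo a b, Nrm p μ (Ico x b) w ^ r.toReal ∂lam) ^ (1 / r.toReal) +
            Nrm p μ (Ioo a b) w * (Nrm q ν (Ioo a b) u)⁻¹ < ⊤) ∧
        C₁ * ((∫⁻ x in Ioo a b, Nrm p μ (Ico x b) w ^ r.toReal ∂lam) ^ (1 / r.toReal) +
            Nrm p μ (Ioo a b) w * (Nrm q ν (Ioo a b) u)⁻¹) ≤
          bestCdual p q a b μ ν w u ∧
        bestCdual p q a b μ ν w u ≤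
          C₂ * ((∫⁻ x in Ioo a b, Nrm p μ (Ico x b) w ^ r.toReal ∂lam) ^ (1 / r.toReal) +
            Nrm p μ (Ioo a b) w * (Nrm q ν (Ioo a b) u)⁻¹) := by
  have hq0 : q ≠ ⊤ := hq.ne
  have hp0 : p ≠ ⊤ := (hpq.trans hq).ne
  have hP : 0 < p.toReal := ENNReal.toReal_pos hp.ne' hp0
  have hPQ : p.toReal < q.toReal := (ENNReal.toReal_lt_toReal hp0 hq0).2 hpq
  have hR : r.toReal⁻¹ = p.toReal⁻¹ - q.toReal⁻¹ := by
    rw [← ENNReal.toReal_inv, hr, ENNReal.toReal_sub_of_le (ENNReal.inv_le_inv.2 hpq.le)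
      (ENNReal.inv_ne_top.2 hp.ne'), ENNReal.toReal_inv, ENNReal.toReal_inv]
  set P := p.toReal with hPdef
  set Q := q.toReal with hQdef
  set R := r.toReal with hRdef
  have hQ : 0 < Q := hP.trans hPQ
  have hRpos : 0 < R := by
    rw [← inv_pos, hR, sub_pos]
    exact inv_strictAnti₀ hP hPQ
  set γ := R / Q with hγR
  have hγ : 0 < γ := by positivity
  have hγ1 : γ + 1 = R / P := by
    rw [hγR]
    field_simp at hR ⊢
    linarith
  set κ : ℝ≥0∞ := 4 ^ ((γ + 2) / P) with hκ
  have hκt : κ ≠ ⊤ := ENNReal.rpow_ne_top_of_nonneg (by positivity) (by norm_num)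
  set C : ℝ≥0∞ := 2 ^ γ⁻¹ * 4 ^ (γ⁻¹ + 1) * 2 with hC
  have hCt : C ≠ ⊤ := ENNReal.mul_ne_top (ENNReal.mul_ne_top
    (ENNReal.rpow_ne_top_of_nonneg (by positivity) (by norm_num))
    (ENNReal.rpow_ne_top_of_nonneg (by positivity) (by norm_num))) (by norm_num)
  have hC0 : C ≠ 0 := by
    rw [hC]
    simp [ENNReal.rpow_eq_zero_iff]
  have hCR0 : C ^ (1 / R) ≠ 0 := by simp [ENNReal.rpow_eq_zero_iff, hC0, hCt]
  have hCRt : C ^ (1 / R) ≠ ⊤ := ENNReal.rpow_ne_top_of_nonneg (by positivity) hCt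
  refine ⟨(κ + 1)⁻¹, C ^ (1 / R), ENNReal.inv_pos.2 (ENNReal.add_ne_top.2 ⟨hκt, by norm_num⟩),
    hCRt.lt_top, ?_⟩
  intro a b hab μ ν w u hw hu hfin _ lam hlam
  set τ := densOn a b μ fun x => w x ^ P with hτ
  set σ := densOn a b ν fun x => u x ^ Q with hσ
  set L := lam.restrict (Ioo a b) with hL
  have hNw : ∀ x ∈ Ioo a b, Nrm p μ (Ico x b) w = τ (Ici x) ^ (1 / P) := fun x hx => by
    rw [Nrm, if_neg hp0, hτ, densOn_Ici hx.1]
  have hNu : ∀ x ∈ Ioo a b, Nrm q ν (Ico x b) u = σ (Ici x) ^ (1 / Q) := fun x hx => by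
    rw [Nrm, if_neg hq0, hσ, densOn_Ici hx.1]
  have hNwu : Nrm p μ (Ioo a b) w = τ univ ^ (1 / P) := by
    rw [Nrm, if_neg hp0, hτ, densOn_univ]
  have hNuu : Nrm q ν (Ioo a b) u = σ univ ^ (1 / Q) := by
    rw [Nrm, if_neg hq0, hσ, densOn_univ]
  have hpair : LSPair γ a b σ L := by
    refine ⟨hγ, hab, fun t ht => ?_, densOn_Iic_left _ _ _ _, densOn_Ici_right _ _ _ _,
      restrict_Ioo_Iic _ _ _, restrict_Ioo_Ici _ _ _, fun α β h1 h2 h3 => ?_⟩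
    · have := hfin t ht
      rw [hNu t ht] at this
      exact (ENNReal.rpow_lt_top_iff_of_pos (by positivity)).1 this
    · have h4 := hlam α β h1 h2 h3
      rw [hNu α ⟨h1, h2.trans_lt h3⟩, hNu β ⟨h1.trans_le h2, h3⟩, ← ENNReal.rpow_mul,
        ← ENNReal.rpow_mul, one_div_mul_eq_div] at h4
      rw [hL, Measure.restrict_apply measurableSet_Ico, ← h4]
      congr 1
      exact inter_eq_left.2 fun z hz => ⟨h1.trans_le hz.1, hz.2.trans h3⟩
  have hXeq : ∫⁻ x in Ioo a b, Nrm p μ (Ico x b) w ^ R ∂lam = ∫⁻ x, τ (Ici x) ^ (γ + 1) ∂L := by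
    refine setLIntegral_congr_fun measurableSet_Ioo fun x hx => ?_
    rw [hNw x hx, ← ENNReal.rpow_mul, one_div_mul_eq_div, hγ1]
  rw [hXeq, hNwu, hNuu]
  set X := ∫⁻ x, τ (Ici x) ^ (γ + 1) ∂L with hX
  set B := X ^ (1 / R) + τ univ ^ (1 / P) * (σ univ ^ (1 / Q))⁻¹ with hB
  have hLHS : ∀ g : ℝ → ℝ≥0∞, Measurable g →
      Nrm p μ (Ioo a b) (fun t => g t * w t) = (∫⁻ x, g x ^ P ∂τ) ^ (1 / P) := fun g hg => by
    rw [Nrm, if_neg hp0, hτ, lintegral_densOn a b μ hw hg hP.le]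
    simp only [mul_comm (g _)]
    rfl
  have hRHS : ∀ g : ℝ → ℝ≥0∞, RHSdual q a b μ ν u g =
      (∫⁻ x, eSup μ (Ioo a x) g ^ Q ∂σ) ^ (1 / Q) := fun g => by
    rw [RHSdual, Nrm, if_neg hq0, hσ, lintegral_densOn a b ν hu (eSup_monotone μ a g).measurable hQ.le]
  have hup : B ≠ ⊤ → ∀ g : ℝ → ℝ≥0∞, Measurable g →
      Nrm p μ (Ioo a b) (fun t => g t * w t) ≤ C ^ (1 / R) * B * RHSdual q a b μ ν u g := by
    intro hBt g hg
    have hXB : X ≤ B ^ R := by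
      have := ENNReal.rpow_le_rpow (le_self_add : X ^ (1 / R) ≤ B) hRpos.le
      rwa [← ENNReal.rpow_mul, one_div_mul_cancel hRpos.ne', ENNReal.rpow_one] at this
    have hYB : τ univ ^ (γ + 1) * (σ univ ^ γ)⁻¹ ≤ B ^ R := by
      have := ENNReal.rpow_le_rpow
        (le_add_self : τ univ ^ (1 / P) * (σ univ ^ (1 / Q))⁻¹ ≤ B) hRpos.le
      rwa [ENNReal.mul_rpow_of_nonneg _ _ hRpos.le, ENNReal.inv_rpow, ← ENNReal.rpow_mul,
        ← ENNReal.rpow_mul, one_div_mul_eq_div, one_div_mul_eq_div, ← hγ1, ← hγR] at this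
    have hmain := upper_core hP hPQ hR hγR hpair (densOn_Iic_left _ _ _ _)
      (densOn_Ici_right _ _ _ _) (ENNReal.rpow_ne_top_of_nonneg hRpos.le hBt) hXB hYB hg
      (eSup_monotone μ a g).measurable (by
        intro x hx
        refine withDensity_absolutelyContinuous _ _ ?_
        rw [Measure.restrict_apply' measurableSet_Ioo]
        refine measure_mono_null ?_ (eSup_null μ (Ioo a x) g)
        rintro z ⟨⟨h1, h2⟩, h3⟩
        exact ⟨⟨h3.1, h2⟩, h1⟩)
    rw [hLHS g hg, hRHS g]
    refine hmain.trans (le_of_eq ?_)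
    rw [← mul_assoc, ← hC, ENNReal.mul_rpow_of_nonneg _ _ (by positivity), ← ENNReal.rpow_mul,
      mul_one_div_cancel hRpos.ne', ENNReal.rpow_one]
  have hlow : ∀ c : ℝ≥0∞, (∀ g : ℝ → ℝ≥0∞, Measurable g →
      Nrm p μ (Ioo a b) (fun t => g t * w t) ≤ c * RHSdual q a b μ ν u g) →
      (κ + 1)⁻¹ * B ≤ c := by
    intro c hcg
    rcases eq_or_ne c ⊤ with hct | hct
    · rw [hct]; exact le_top
    have H : ∀ g G : ℝ → ℝ≥0∞, Measurable g → (∀ z x, z < x → g z ≤ G x) →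
        (∫⁻ x, g x ^ P ∂τ) ^ (1 / P) ≤ c * (∫⁻ x, G x ^ Q ∂σ) ^ (1 / Q) := by
      intro g G hg hgG
      have h1 := hcg g hg
      rw [hLHS g hg, hRHS g] at h1
      refine h1.trans ?_
      gcongr with x
      exact eSup_le fun z hz => hgG z x hz.2
    have h1 := lower_first hP hPQ H
    have h2 := ENNReal.rpow_le_rpow
      (lower_second hP hPQ hR hγR hpair (densOn_Iic_left _ _ _ _) hct H)
      (by positivity : 0 ≤ 1 / R)
    rw [← ENNReal.rpow_mul, mul_one_div_cancel hRpos.ne', ENNReal.rpow_one] at h2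
    have h3 : B ≤ (κ + 1) * c := by
      rw [add_mul, one_mul]
      exact add_le_add h2 h1
    calc (κ + 1)⁻¹ * B ≤ (κ + 1)⁻¹ * ((κ + 1) * c) := by gcongr
      _ = ((κ + 1)⁻¹ * (κ + 1)) * c := by rw [mul_assoc]
      _ ≤ 1 * c := by gcongr; exact ENNReal.inv_mul_le_one _
      _ = c := one_mul c
  refine ⟨⟨?_, fun hBt => ?_⟩, ?_, ?_⟩
  · rintro ⟨c, -, hct, hcg⟩
    by_contra hBt
    have h1 := hlow c hcg
    rw [not_lt_top_iff.1 hBt, ENNReal.mul_top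
      (ENNReal.inv_ne_zero.2 (ENNReal.add_ne_top.2 ⟨hκt, by norm_num⟩))] at h1
    exact absurd hct (not_lt.2 h1)
  · refine ⟨C ^ (1 / R) * B + 1, by positivity,
      ENNReal.add_lt_top.2 ⟨ENNReal.mul_lt_top hCRt.lt_top hBt, by norm_num⟩, fun g hg => ?_⟩
    refine (hup hBt.ne g hg).trans ?_
    gcongr
    exact le_self_add
  · exact le_sInf fun c hcg => hlow c hcg
  · rcases eq_or_ne B ⊤ with hBt | hBt
    · rw [hBt, ENNReal.mul_top hCR0]
      exact le_top
    · exact sInf_le (hup hBt)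
end
end

section
/- Let 0 < p < +∞. Let μ and ν be non-negative Borel measures on I = (a,b) ⊆ ℝ, let w ∈ B⁺(I), and let u ∈ B⁺(I) satisfy ‖u‖_{∞,[t,b),ν} < ∞ for all t ∈ I and u ≠ 0 ν-a.e. on (a,b). Then ( ∫_{(a,b)} ( w(x) / ‖u‖_{∞,(x,b),ν} )^p dμ(x) )^{1/p} ≈ ( ∫_{(a,b)} ‖w‖_{p,[x,b),μ}^p d( ‖u‖_{∞,[x−,b),ν}^{−p} ) )^{1/p} + ‖w‖_{p,(a,b),μ} · ‖u‖_{∞,(a,b),ν}^{−1}, where ‖u‖_{∞,[x−,b),ν} := lim_{s→x−} ‖u‖_{∞,[s,b),ν}, the integral is the Lebesgue–Stieltjes integral with respect to the non-decreasing left-continuous function x ↦ ‖u‖_{∞,[x−,b),ν}^{−p}, and the equivalence constants depend only on p. -/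
/-!
Write `V x = ‖u‖_{∞,(x,b),ν}` and `h x = ‖u‖_{∞,[x-,b),ν}⁻ᵖ`. Since `V x` is the right limit at `x`
of `‖u‖_{∞,[·-,b),ν}` (`eSup_Ioo_eq_iSup`), `(V x)⁻ᵖ` is the right limit of `h` at `x`, and hence
`(V x)⁻ᵖ = lam (a, x] + ‖u‖_{∞,(a,b),ν}⁻ᵖ` (`iInf_eq_measure_Ioc_add_iInf`). This remains true when
`h` takes the value `∞`, with `∞ - ∞ = 0` in the values of `lam`.

Multiplying by `wᵖ`, integrating against `μ` and exchanging the order of integration gives an exact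
identity: the `p`-th power of the left side is the sum of the `p`-th powers of the two terms on the
right (`lintegral_div_eSup_rpow`). The equivalence follows from
`(A ^ q + B ^ q) / 2 ≤ (A + B) ^ q ≤ 2 ^ q * (A ^ q + B ^ q)` with `q = 1 / p`.

Neither `μ` nor `lam` is assumed s-finite, so Mathlib's Tonelli theorem does not apply directly;
`lintegral_measure_Iic_eq_lintegral_measure_Ici` proves the exchange for the kernel `1_{y ≤ x}` and
arbitrary measures.
-/

open MeasureTheory Set ENNReal

noncomputable section

/-- `‖u‖_{∞,[x-,b),ν} := lim_{s→x-} ‖u‖_{∞,[s,b),ν}`; since `s ↦ ‖u‖_{∞,[s,b),ν}` is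
non-increasing, the left limit at `x ∈ (a,b)` equals the infimum over `s ∈ (a,x)`. -/
def uNminus (ν : Measure ℝ) (a b : ℝ) (u : ℝ → ℝ≥0∞) (x : ℝ) : ℝ≥0∞ :=
  ⨅ s ∈ Ioo a x, eSup ν (Ico s b) u

/-! ### Monotone kernels and arbitrary measures on the line -/

/-- Continuity from below at an open left endpoint. -/
lemma measure_Ioo_le_of_Ico (m : Measure ℝ) (x y : ℝ) (M : ℝ≥0∞)
    (h : ∀ z ∈ Ioo x y, m (Ico z y) ≤ M) : m (Ioo x y) ≤ M := by
  rcases le_or_gt y x with hyx | hxy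
  · simp [Ioo_eq_empty_of_le hyx]
  obtain ⟨s, hs, hsm, hst⟩ := exists_seq_strictAnti_tendsto' hxy
  have hU : Ioo x y ⊆ ⋃ n, Ico (s n) y := by
    intro t ht
    obtain ⟨n, hn⟩ := (hst.eventually (gt_mem_nhds ht.1)).exists
    exact mem_iUnion.2 ⟨n, hn.le, ht.2⟩
  have hmono : Monotone fun n => Ico (s n) y :=
    fun i j hij => Ico_subset_Ico_left (hs.antitone hij)
  calc m (Ioo x y) ≤ m (⋃ n, Ico (s n) y) := measure_mono hU
    _ = ⨆ n, m (Ico (s n) y) := hmono.measure_iUnion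
    _ ≤ M := iSup_le fun n => h _ (hsm n)

/-- An upper set of reals is a countable union of closed half-lines. -/
lemma exists_countable_cover_Ici {S : Set ℝ} (hS : IsUpperSet S) :
    ∃ T : Set ℝ, T.Countable ∧ T ⊆ S ∧ S ⊆ ⋃ t ∈ T, Ici t := by
  refine ⟨(S ∩ range ((↑) : ℚ → ℝ)) ∪ {t | IsLeast S t},
    ((countable_range _).mono inter_subset_right).union
      (Set.Subsingleton.countable fun x hx y hy => hx.unique hy),
    union_subset inter_subset_left fun t ht => ht.1, fun y hy => ?_⟩
  by_cases hl : IsLeast S y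
  · exact mem_iUnion₂.2 ⟨y, Or.inr hl, le_refl y⟩
  · obtain ⟨z, hz, hzy⟩ : ∃ z ∈ S, z < y := by
      by_contra! hc
      exact hl ⟨hy, fun z hz => hc z hz⟩
    obtain ⟨q, hzq, hqy⟩ := exists_rat_btwn hzy
    exact mem_iUnion₂.2 ⟨q, Or.inl ⟨hS hzq.le hz, q, rfl⟩, hqy.le⟩

/-- A lower set of reals is a countable union of closed half-lines. -/
lemma exists_countable_cover_Iic {S : Set ℝ} (hS : IsLowerSet S) :
    ∃ T : Set ℝ, T.Countable ∧ T ⊆ S ∧ S ⊆ ⋃ t ∈ T, Iic t := by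
  refine ⟨(S ∩ range ((↑) : ℚ → ℝ)) ∪ {t | IsGreatest S t},
    ((countable_range _).mono inter_subset_right).union
      (Set.Subsingleton.countable fun x hx y hy => hx.unique hy),
    union_subset inter_subset_left fun t ht => ht.1, fun y hy => ?_⟩
  by_cases hl : IsGreatest S y
  · exact mem_iUnion₂.2 ⟨y, Or.inr hl, le_refl y⟩
  · obtain ⟨z, hz, hzy⟩ : ∃ z ∈ S, y < z := by
      by_contra! hc
      exact hl ⟨hy, fun z hz => hc z hz⟩
    obtain ⟨q, hyq, hqz⟩ := exists_rat_btwn hzy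
    exact mem_iUnion₂.2 ⟨q, Or.inl ⟨hS hqz.le hz, q, rfl⟩, hyq.le⟩

/-- A measure is σ-finite on a measurable set covered by countably many sets of finite measure. -/
lemma sigmaFinite_restrict_of_cover (m : Measure ℝ) {S : Set ℝ} {T : Set ℝ} (hT : T.Countable)
    (f : ℝ → Set ℝ) (hS : MeasurableSet S) (hcov : S ⊆ ⋃ t ∈ T, f t)
    (hf : ∀ t ∈ T, m (f t) < ⊤) :
    SigmaFinite (m.restrict S) := by
  refine Measure.sigmaFinite_of_countable (S := insert Sᶜ (f '' T))
    ((hT.image f).insert _) ?_ ?_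
  · rintro _ (rfl | ⟨t, ht, rfl⟩)
    · rw [Measure.restrict_apply hS.compl]; simp
    · exact (Measure.restrict_apply_le _ _).trans_lt (hf t ht)
  · refine eq_univ_of_forall fun x => ?_
    by_cases hx : x ∈ S
    · obtain ⟨t, ht, hxt⟩ := mem_iUnion₂.1 (hcov hx)
      exact ⟨f t, Or.inr ⟨t, ht, rfl⟩, hxt⟩
    · exact ⟨Sᶜ, Or.inl rfl, hx⟩

/-- Tonelli's theorem for the kernel `1_{y ≤ x}`, with no finiteness assumption on either measure.
If `l (Iic y) * m (Ici y) = ∞` for some `y`, both sides are infinite. Otherwise the points `y` at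
which `l (Iic y)` or `m (Ici y)` is infinite contribute nothing to either side, and both measures
are σ-finite on the remaining set. -/
lemma lintegral_measure_Iic_eq_lintegral_measure_Ici (l m : Measure ℝ) :
    ∫⁻ x, l (Iic x) ∂m = ∫⁻ y, m (Ici y) ∂l := by
  have h1 : ∀ y, l (Iic y) * m (Ici y) ≤ ∫⁻ x, l (Iic x) ∂m := fun y => by
    calc l (Iic y) * m (Ici y) = ∫⁻ _ in Ici y, l (Iic y) ∂m := by simp
      _ ≤ ∫⁻ x in Ici y, l (Iic x) ∂m :=
        setLIntegral_mono' measurableSet_Ici fun x hx => measure_mono (Iic_subset_Iic.2 hx)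
      _ ≤ _ := setLIntegral_le_lintegral _ _
  have h2 : ∀ y, l (Iic y) * m (Ici y) ≤ ∫⁻ x, m (Ici x) ∂l := fun y => by
    calc l (Iic y) * m (Ici y) = ∫⁻ _ in Iic y, m (Ici y) ∂l := by simp [mul_comm]
      _ ≤ ∫⁻ x in Iic y, m (Ici x) ∂l :=
        setLIntegral_mono' measurableSet_Iic fun x hx => measure_mono (Ici_subset_Ici.2 hx)
      _ ≤ _ := setLIntegral_le_lintegral _ _
  by_cases hbad : ∃ y, l (Iic y) * m (Ici y) = ⊤
  · obtain ⟨y, hy⟩ := hbad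
    rw [top_unique (hy.ge.trans (h1 y)), top_unique (hy.ge.trans (h2 y))]
  push Not at hbad
  set S : Set ℝ := {y | m (Ici y) < ⊤} with hSdef
  set R : Set ℝ := {x | l (Iic x) < ⊤} with hRdef
  have hSu : IsUpperSet S := fun x y hxy hx =>
    (measure_mono (Ici_subset_Ici.2 hxy)).trans_lt hx
  have hRl : IsLowerSet R := fun x y hxy hx =>
    (measure_mono (Iic_subset_Iic.2 hxy)).trans_lt hx
  have hSm : MeasurableSet S := hSu.ordConnected.measurableSet
  have hRm : MeasurableSet R := hRl.ordConnected.measurableSet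
  have hS0 : ∀ x, x ∉ S → l (Iic x) = 0 := fun x hx => by
    have hx' : m (Ici x) = ⊤ := not_lt_top_iff.1 hx
    by_contra h0
    exact hbad x (by rw [hx', ENNReal.mul_top h0])
  have hR0 : ∀ x, x ∉ R → m (Ici x) = 0 := fun x hx => by
    have hx' : l (Iic x) = ⊤ := not_lt_top_iff.1 hx
    by_contra h0
    exact hbad x (by rw [hx', ENNReal.top_mul h0])
  have hlS : l Sᶜ = 0 := by
    obtain ⟨T, hTc, hTS, hcov⟩ := exists_countable_cover_Iic hSu.compl
    exact measure_mono_null hcov ((measure_biUnion_null_iff hTc).2 fun t ht => hS0 t (hTS ht))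
  have hmR : m Rᶜ = 0 := by
    obtain ⟨T, hTc, hTS, hcov⟩ := exists_countable_cover_Ici hRl.compl
    exact measure_mono_null hcov ((measure_biUnion_null_iff hTc).2 fun t ht => hR0 t (hTS ht))
  have hsm : SigmaFinite (m.restrict S) := by
    obtain ⟨T, hTc, hTS, hcov⟩ := exists_countable_cover_Ici hSu
    exact sigmaFinite_restrict_of_cover m hTc Ici hSm hcov fun t ht => hTS ht
  have hsl : SigmaFinite (l.restrict R) := by
    obtain ⟨T, hTc, hTS, hcov⟩ := exists_countable_cover_Iic hRl
    exact sigmaFinite_restrict_of_cover l hTc Iic hRm hcov fun t ht => hTS ht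
  have e1 : ∫⁻ x, l (Iic x) ∂m = ∫⁻ x, l.restrict R (Iic x) ∂(m.restrict S) := by
    rw [← lintegral_indicator hSm]
    refine lintegral_congr_ae ?_
    filter_upwards [show ∀ᵐ x ∂m, x ∈ R from hmR] with x hxR
    by_cases hx : x ∈ S
    · rw [indicator_of_mem hx, Measure.restrict_apply measurableSet_Iic,
        inter_eq_left.2 (hRl.Iic_subset hxR)]
    · rw [indicator_of_notMem hx, hS0 x hx]
  have e2 : ∫⁻ y, m (Ici y) ∂l = ∫⁻ y, m.restrict S (Ici y) ∂(l.restrict R) := by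
    rw [← lintegral_indicator hRm]
    refine lintegral_congr_ae ?_
    filter_upwards [show ∀ᵐ x ∂l, x ∈ S from hlS] with x hxS
    by_cases hx : x ∈ R
    · rw [indicator_of_mem hx, Measure.restrict_apply measurableSet_Ici,
        inter_eq_left.2 (hSu.Ici_subset hxS)]
    · rw [indicator_of_notMem hx, hR0 x hx]
  rw [e1, e2]
  set l' := l.restrict R
  set m' := m.restrict S
  have hK : Measurable (Function.uncurry fun x y : ℝ => (Iic x).indicator (1 : ℝ → ℝ≥0∞) y) := by
    have : (Function.uncurry fun x y : ℝ => (Iic x).indicator (1 : ℝ → ℝ≥0∞) y)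
        = {q : ℝ × ℝ | q.2 ≤ q.1}.indicator 1 := by
      ext ⟨x, y⟩; simp [indicator]
    rw [this]
    exact measurable_one.indicator (measurableSet_le measurable_snd measurable_fst)
  calc ∫⁻ x, l' (Iic x) ∂m'
      = ∫⁻ x, ∫⁻ y, (Iic x).indicator (1 : ℝ → ℝ≥0∞) y ∂l' ∂m' := by
        simp_rw [lintegral_indicator_one measurableSet_Iic]
    _ = ∫⁻ y, ∫⁻ x, (Iic x).indicator (1 : ℝ → ℝ≥0∞) y ∂m' ∂l' :=
        lintegral_lintegral_swap hK.aemeasurable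
    _ = ∫⁻ y, ∫⁻ x, (Ici y).indicator (1 : ℝ → ℝ≥0∞) x ∂m' ∂l' := by
        simp [indicator]
    _ = ∫⁻ y, m' (Ici y) ∂l' := by
        simp_rw [lintegral_indicator_one measurableSet_Ici]

/-! ### The weight as a Stieltjes distribution function -/

lemma eSup_mono (ν : Measure ℝ) {E F : Set ℝ} (h : E ⊆ F) (u : ℝ → ℝ≥0∞) :
    eSup ν E u ≤ eSup ν F u :=
  sSup_le_sSup fun α hα => lt_of_lt_of_le hα
    (measure_mono (fun _ hy => ⟨h hy.1, hy.2⟩ : {y | y ∈ E ∧ α ≤ u y} ⊆ {y | y ∈ F ∧ α ≤ u y}))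

lemma uNminus_antitone (ν : Measure ℝ) (a b : ℝ) (u : ℝ → ℝ≥0∞) :
    Antitone (uNminus ν a b u) := fun _ _ hxy =>
  le_iInf₂ fun s hs => iInf₂_le s ⟨hs.1, hs.2.trans_le hxy⟩

/-- The essential supremum over `(x, b)` is the right limit at `x` of `uNminus`. -/
lemma eSup_Ioo_eq_iSup (ν : Measure ℝ) {a b x : ℝ} (hax : a ≤ x) (u : ℝ → ℝ≥0∞)
    (hu : Measurable u) :
    eSup ν (Ioo x b) u = ⨆ y : Ioo x b, uNminus ν a b u y := by
  apply le_antisymm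
  · refine sSup_le fun α hα => ?_
    have hms : MeasurableSet {y | α ≤ u y} := measurableSet_le measurable_const hu
    have hex : ∃ z ∈ Ioo x b, 0 < ν {y | y ∈ Ico z b ∧ α ≤ u y} := by
      by_contra! hc
      have := measure_Ioo_le_of_Ico (ν.restrict {y | α ≤ u y}) x b 0 fun z hz => by
        rw [Measure.restrict_apply measurableSet_Ico]; exact hc z hz
      rw [Measure.restrict_apply measurableSet_Ioo] at this
      exact absurd hα (not_lt.2 this)
    obtain ⟨z, hz, hpos⟩ := hex
    refine le_trans ?_ (le_iSup (fun y : Ioo x b => uNminus ν a b u y) ⟨z, hz⟩)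
    refine le_iInf₂ fun s hs => (show α ≤ eSup ν (Ico z b) u from le_sSup hpos).trans ?_
    exact eSup_mono ν (Ico_subset_Ico_left hs.2.le) u
  · refine iSup_le fun y => ?_
    obtain ⟨s, hs1, hs2⟩ := exists_between y.2.1
    refine (iInf₂_le s ⟨hax.trans_lt hs1, hs2⟩).trans ?_
    exact eSup_mono ν (fun t ht => ⟨hs1.trans_le ht.1, ht.2⟩ : Ico s b ⊆ Ioo x b) u

/-- The previous lemma after applying the decreasing bijection `t ↦ t⁻ᵖ`. -/
lemma eSup_Ioo_rpow_inv (ν : Measure ℝ) {a b x r : ℝ} (hr : 0 < r) (hax : a ≤ x)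
    (u : ℝ → ℝ≥0∞) (hu : Measurable u) :
    (eSup ν (Ioo x b) u ^ r)⁻¹ = ⨅ y : Ioo x b, (uNminus ν a b u y ^ r)⁻¹ := by
  rw [eSup_Ioo_eq_iSup ν hax u hu, ← ENNReal.inv_iSup]
  congr 1
  exact (ENNReal.orderIsoRpow r hr).map_iSup _

/-- The right limit at `x` of a non-decreasing `h` equals its right limit at `a` plus the
Stieltjes mass of `(a, x]`. Infinite values are allowed: truncated subtraction satisfies
`h β - h α + h α = h β` whenever `h α ≤ h β`. -/
lemma iInf_eq_measure_Ioc_add_iInf (l : Measure ℝ) {a b x : ℝ} (hx : x ∈ Ioo a b)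
    (h : ℝ → ℝ≥0∞) (hmono : Monotone h)
    (hl : ∀ α β : ℝ, a < α → α ≤ β → β < b → l (Ico α β) = h β - h α) :
    ⨅ y : Ioo x b, h y = l (Ioc a x) + ⨅ y : Ioo a b, h y := by
  have hadd : ∀ α β : ℝ, a < α → α ≤ β → β < b → l (Ico α β) + h α = h β :=
    fun α β h1 h2 h3 => by rw [hl α β h1 h2 h3, tsub_add_cancel_of_le (hmono h2)]
  apply le_antisymm
  · rw [ENNReal.add_iInf]
    -- By monotonicity of `h`, it is enough to bound by `h α` with `α ≤ x`.
    refine le_iInf fun α₀ => ?_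
    obtain ⟨α₀, hα₀⟩ := α₀
    set α := min α₀ x
    have haα : a < α := lt_min hα₀.1 hx.1
    have hαx : α ≤ x := min_le_right _ _
    set H := ⨅ y : Ioo x b, h y with hH
    -- `l (Ioo x y)` is bounded by `h y - H`, which tends to `0` as `y` decreases to `x`.
    have hkey : ∀ y ∈ Ioo x b, H ≤ l (Icc α x) + h α + (h y - H) := fun y hy => by
      have hIoo : l (Ioo x y) ≤ h y - H := measure_Ioo_le_of_Ico l x y _ fun z hz => by
        rw [hl z y (hx.1.trans hz.1) hz.2.le hy.2]
        exact tsub_le_tsub_left (iInf_le (fun y : Ioo x b => h y) ⟨z, hz.1, hz.2.trans hy.2⟩) _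
      have hsub : Ico α y ⊆ Icc α x ∪ Ioo x y := fun t ht =>
        (le_or_gt t x).imp (fun h => ⟨ht.1, h⟩) fun h => ⟨h, ht.2⟩
      calc H ≤ h y := iInf_le (fun y : Ioo x b => h y) ⟨y, hy⟩
        _ = l (Ico α y) + h α := (hadd α y haα (hαx.trans hy.1.le) hy.2).symm
        _ ≤ (l (Icc α x) + l (Ioo x y)) + h α := by
          gcongr; exact (measure_mono hsub).trans (measure_union_le _ _)
        _ ≤ (l (Icc α x) + (h y - H)) + h α := by gcongr
        _ = _ := by ring
    have hHle : H ≤ l (Icc α x) + h α := by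
      -- If `H = ∞`, the error term `h y - H` is already `0`.
      by_cases htop : H = ⊤
      · obtain ⟨y, hy⟩ := exists_between hx.2
        simpa [htop] using hkey y hy
      refine ENNReal.le_of_forall_pos_le_add fun ε hε _ => ?_
      have hlt : H < H + ε := ENNReal.lt_add_right htop (by exact_mod_cast hε.ne')
      obtain ⟨⟨y, hy⟩, hyε⟩ := iInf_lt_iff.1 hlt
      refine (hkey y hy).trans ?_
      gcongr
      exact tsub_le_iff_left.2 hyε.le
    refine hHle.trans (add_le_add (measure_mono
      (fun t ht => ⟨haα.trans_le ht.1, ht.2⟩ : Icc α x ⊆ Ioc a x)) ?_)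
    exact hmono (min_le_left _ _)
  · refine le_iInf fun y => ?_
    obtain ⟨y, hy⟩ := y
    have hIoo : l (Ioo a y) ≤ h y - ⨅ y : Ioo a b, h y :=
      measure_Ioo_le_of_Ico l a y _ fun z hz => by
        rw [hl z y hz.1 hz.2.le hy.2]
        exact tsub_le_tsub_left (iInf_le (fun y : Ioo a b => h y) ⟨z, hz.1, hz.2.trans hy.2⟩) _
    calc l (Ioc a x) + ⨅ y : Ioo a b, h y
        ≤ (h y - ⨅ y : Ioo a b, h y) + ⨅ y : Ioo a b, h y := by
          gcongr
          exact (measure_mono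
            (fun t ht => ⟨ht.1, ht.2.trans_lt hy.1⟩ : Ioc a x ⊆ Ioo a y)).trans hIoo
      _ = h y := tsub_add_cancel_of_le
          (iInf_le (fun y : Ioo a b => h y) ⟨y, hx.1.trans hy.1, hy.2⟩)

/-! ### The integral identity and the equivalence -/

lemma half_mul_add_rpow_le (A B : ℝ≥0∞) {q : ℝ} (hq : 0 < q) :
    2⁻¹ * (A ^ q + B ^ q) ≤ (A + B) ^ q := by
  have hA : A ^ q ≤ (A + B) ^ q := ENNReal.rpow_le_rpow le_self_add hq.le
  have hB : B ^ q ≤ (A + B) ^ q := ENNReal.rpow_le_rpow le_add_self hq.le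
  calc 2⁻¹ * (A ^ q + B ^ q) ≤ 2⁻¹ * ((A + B) ^ q + (A + B) ^ q) := by gcongr
    _ = (A + B) ^ q := by
      rw [← two_mul, ← mul_assoc, ENNReal.inv_mul_cancel two_ne_zero ofNat_ne_top, one_mul]

lemma add_rpow_le_two_rpow_mul (A B : ℝ≥0∞) {q : ℝ} (hq : 0 < q) :
    (A + B) ^ q ≤ 2 ^ q * (A ^ q + B ^ q) := by
  rcases le_total A B with h | h
  · calc (A + B) ^ q ≤ (2 * B) ^ q := by rw [two_mul]; gcongr
      _ = 2 ^ q * B ^ q := ENNReal.mul_rpow_of_nonneg _ _ hq.le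
      _ ≤ _ := by gcongr; exact le_add_self
  · calc (A + B) ^ q ≤ (2 * A) ^ q := by rw [two_mul]; gcongr
      _ = 2 ^ q * A ^ q := ENNReal.mul_rpow_of_nonneg _ _ hq.le
      _ ≤ _ := by gcongr; exact le_self_add

/-- The exact identity behind the equivalence: the `p`-th power of the left side is the sum of the
`p`-th powers of the two terms on the right. -/
lemma lintegral_div_eSup_rpow (r : ℝ) (hr : 0 < r) {a b : ℝ}
    (μ ν : Measure ℝ) (w u : ℝ → ℝ≥0∞) (hw : Measurable w) (hu : Measurable u) (lam : Measure ℝ)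
    (hlam : ∀ α β : ℝ, a < α → α ≤ β → β < b →
      lam (Ico α β) = (uNminus ν a b u β ^ r)⁻¹ - (uNminus ν a b u α ^ r)⁻¹) :
    ∫⁻ x in Ioo a b, (w x / eSup ν (Ioo x b) u) ^ r ∂μ =
      ∫⁻ x in Ioo a b, (∫⁻ t in Ico x b, w t ^ r ∂μ) ∂lam +
        (∫⁻ x in Ioo a b, w x ^ r ∂μ) * (eSup ν (Ioo a b) u ^ r)⁻¹ := by
  have hwr : Measurable fun x => w x ^ r := hw.pow_const r
  set l := lam.restrict (Ioo a b) with hldef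
  set m := (μ.restrict (Ioo a b)).withDensity (fun x => w x ^ r) with hmdef
  set K := (eSup ν (Ioo a b) u ^ r)⁻¹ with hK
  have hlmeas : Measurable fun x => l (Iic x) :=
    Monotone.measurable fun x y hxy => measure_mono (Iic_subset_Iic.2 hxy)
  have hpt : ∀ x ∈ Ioo a b, (w x / eSup ν (Ioo x b) u) ^ r =
      w x ^ r * l (Iic x) + w x ^ r * K := fun x hx => by
    have hset : Iic x ∩ Ioo a b = Ioc a x := by
      ext t; constructor
      · exact fun ht => ⟨ht.2.1, ht.1⟩
      · exact fun ht => ⟨ht.2, ht.1, ht.2.trans_lt hx.2⟩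
    have hlx : l (Iic x) = lam (Ioc a x) := by
      rw [hldef, Measure.restrict_apply measurableSet_Iic, hset]
    have hmono : Monotone fun y => (uNminus ν a b u y ^ r)⁻¹ := fun y z hyz =>
      ENNReal.inv_le_inv.2 (ENNReal.rpow_le_rpow (uNminus_antitone ν a b u hyz) hr.le)
    rw [div_eq_mul_inv, ENNReal.mul_rpow_of_nonneg _ _ hr.le, ENNReal.inv_rpow,
      eSup_Ioo_rpow_inv ν hr hx.1.le u hu, hlx, hK, eSup_Ioo_rpow_inv ν hr le_rfl u hu,
      iInf_eq_measure_Ioc_add_iInf lam hx _ hmono hlam, mul_add]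
  rw [setLIntegral_congr_fun measurableSet_Ioo hpt,
    lintegral_add_left (show Measurable fun x => w x ^ r * l (Iic x) from hwr.mul hlmeas), lintegral_mul_const _ hwr]
  congr 1
  have e1 : ∫⁻ x in Ioo a b, w x ^ r * l (Iic x) ∂μ = ∫⁻ x, l (Iic x) ∂m := by
    rw [hmdef, lintegral_withDensity_eq_lintegral_mul _ hwr hlmeas]; rfl
  rw [e1, lintegral_measure_Iic_eq_lintegral_measure_Ici]
  refine setLIntegral_congr_fun measurableSet_Ioo fun y hy => ?_
  have hset : Ici y ∩ Ioo a b = Ico y b := by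
    ext t; constructor
    · exact fun ht => ⟨ht.1, ht.2.2⟩
    · exact fun ht => ⟨ht.1, hy.1.trans_le ht.1, ht.2⟩
  rw [hmdef, withDensity_apply _ measurableSet_Ici, Measure.restrict_restrict measurableSet_Ici,
    hset]

/-- The equivalence in Theorem 4.1 (iii):
`(∫_{(a,b)} (w(x)/‖u‖_{∞,(x,b),ν})^p dμ(x))^{1/p}
  ≈ (∫_{(a,b)} ‖w‖_{p,[x,b),μ}^p d(‖u‖_{∞,[x-,b),ν}^{-p}))^{1/p}
    + ‖w‖_{p,(a,b),μ} ‖u‖_{∞,(a,b),ν}⁻¹`,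
where the Lebesgue–Stieltjes measure `lam` of the non-decreasing left-continuous
function `x ↦ ‖u‖_{∞,[x-,b),ν}^{-p}` is determined by
`lam([α,β)) = ‖u‖_{∞,[β-,b),ν}^{-p} - ‖u‖_{∞,[α-,b),ν}^{-p}`; the equivalence
constants depend only on `p`. -/
theorem statement11 (p : ℝ≥0∞) (hp : 0 < p) (hp' : p ≠ ⊤) :
    ∃ C₁ C₂ : ℝ≥0∞, 0 < C₁ ∧ C₂ < ⊤ ∧
      ∀ (a b : ℝ), a < b →
      ∀ (μ ν : Measure ℝ) (w u : ℝ → ℝ≥0∞),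
        Measurable w → Measurable u →
        (∀ t ∈ Ioo a b, eSup ν (Ico t b) u < ⊤) →
        (∀ᵐ x ∂ν.restrict (Ioo a b), u x ≠ 0) →
        ∀ lam : Measure ℝ,
        (∀ α β : ℝ, a < α → α ≤ β → β < b →
            lam (Ico α β) =
              (uNminus ν a b u β ^ p.toReal)⁻¹ - (uNminus ν a b u α ^ p.toReal)⁻¹) →
        C₁ * ((∫⁻ x in Ioo a b, Nrm p μ (Ico x b) w ^ p.toReal ∂lam) ^ (1 / p.toReal) +
            Nrm p μ (Ioo a b) w * (eSup ν (Ioo a b) u)⁻¹) ≤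
          (∫⁻ x in Ioo a b, (w x / eSup ν (Ioo x b) u) ^ p.toReal ∂μ) ^ (1 / p.toReal) ∧
        (∫⁻ x in Ioo a b, (w x / eSup ν (Ioo x b) u) ^ p.toReal ∂μ) ^ (1 / p.toReal) ≤
          C₂ * ((∫⁻ x in Ioo a b, Nrm p μ (Ico x b) w ^ p.toReal ∂lam) ^ (1 / p.toReal) +
            Nrm p μ (Ioo a b) w * (eSup ν (Ioo a b) u)⁻¹) := by
  have hr : 0 < p.toReal := ENNReal.toReal_pos hp.ne' hp'
  have hq : 0 < 1 / p.toReal := by positivity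
  refine ⟨2⁻¹, 2 ^ (1 / p.toReal), by simp, ENNReal.rpow_lt_top_of_nonneg hq.le ofNat_ne_top, ?_⟩
  intro a b _ μ ν w u hw hu _ _ lam hlam
  have hcancel : ∀ c : ℝ≥0∞, (c ^ (1 / p.toReal)) ^ p.toReal = c := fun c => by
    rw [← ENNReal.rpow_mul, one_div_mul_cancel hr.ne', ENNReal.rpow_one]
  have hcancel' : ∀ c : ℝ≥0∞, (c ^ p.toReal) ^ (1 / p.toReal) = c := fun c => by
    rw [← ENNReal.rpow_mul, mul_one_div_cancel hr.ne', ENNReal.rpow_one]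
  have hsecond : Nrm p μ (Ioo a b) w * (eSup ν (Ioo a b) u)⁻¹ =
      ((∫⁻ x in Ioo a b, w x ^ p.toReal ∂μ) * (eSup ν (Ioo a b) u ^ p.toReal)⁻¹)
        ^ (1 / p.toReal) := by
    rw [ENNReal.mul_rpow_of_nonneg _ _ hq.le, ENNReal.inv_rpow, hcancel', Nrm, if_neg hp']
  have hfirst : ∫⁻ x in Ioo a b, Nrm p μ (Ico x b) w ^ p.toReal ∂lam =
      ∫⁻ x in Ioo a b, (∫⁻ t in Ico x b, w t ^ p.toReal ∂μ) ∂lam := by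
    simp only [Nrm, if_neg hp', hcancel]
  rw [hsecond, hfirst, lintegral_div_eSup_rpow p.toReal hr μ ν w u hw hu lam hlam]
  exact ⟨half_mul_add_rpow_le _ _ hq, add_rpow_le_two_rpow_mul _ _ hq⟩
end
end

section
/- Assume 0 < p, q ≤ +∞. Let λ, μ and ν be non-negative Borel measures on I = (a,b) ⊆ ℝ, let u ∈ B⁺(I), and for each x ∈ I let S_x denote either (a,x) for all x, or (x,b) for all x. Then there exists a constant c > 0 such that ‖g‖_{p,(a,b),λ} ≤ c ‖u(x) ‖g‖_{∞,S_x,μ}‖_{q,(a,b),ν} for all g ∈ B⁺(I) if and only if λ is absolutely continuous with respect to μ and there exists a constant c′ > 0 such that ‖g w‖_{p,(a,b),μ} ≤ c′ ‖u(x) ‖g‖_{∞,S_x,μ}‖_{q,(a,b),ν} for all g ∈ B⁺(I), where w := (dλ/dμ)^{1/p} is the p-th root of the Radon–Nikodym derivative of λ with respect to μ. -/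
/-!
If `λ ≪ μ` on `I = (a,b)`, then `dλ = (dλ/dμ) dμ` there, and the change of density turns
`‖g‖_{p,I,λ}` into `‖g w‖_{p,I,μ}` (`Nrm_eq_Nrm_mul_RNw`). For `p < ∞` this is
`∫ g^p dλ = ∫ g^p w^p dμ`; for `p = ∞` it holds because the `λ`-null sets are those whose
intersection with `{dλ/dμ > 0}` is `μ`-null. The two inequalities are then identical, with the
same constant.

The first inequality forces `λ ≪ μ`: for a Borel set `A` that is `μ`-null in `I`, test it with
the indicator of `A`. All the inner suprema vanish, so the right-hand side is `0`, and therefore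
`λ (A ∩ I) = 0`.
-/


open MeasureTheory Set ENNReal

noncomputable section

/-- `(dλ/dμ)^{1/p}`: the `p`-th root of the Radon–Nikodym derivative of `lam` with
respect to `μ` (both restricted to `(a,b)`); for `p = ∞` it is interpreted as `1` on
the set where `dλ/dμ > 0`. -/
def RNw (p : ℝ≥0∞) (a b : ℝ) (lam μ : Measure ℝ) : ℝ → ℝ≥0∞ :=
  if p = ⊤ then
    Set.indicator {x | 0 < (lam.restrict (Ioo a b)).rnDeriv (μ.restrict (Ioo a b)) x}
      (fun _ => (1 : ℝ≥0∞))
  else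
    fun t => ((lam.restrict (Ioo a b)).rnDeriv (μ.restrict (Ioo a b)) t) ^ (1 / p.toReal)

theorem eSup_eq_zero {μ : Measure ℝ} {E : Set ℝ} {f : ℝ → ℝ≥0∞}
    (h : μ {y | y ∈ E ∧ f y ≠ 0} = 0) : eSup μ E f = 0 := by
  unfold eSup
  refine sSup_eq_bot.2 ?_
  intro α hα
  by_contra h0
  refine (ne_of_gt hα) (measure_mono_null ?_ h)
  rintro y ⟨hy, hy'⟩
  exact ⟨hy, fun h1 => h0 (by simpa [h1] using hy')⟩

theorem Nrm_eq_zero {q : ℝ≥0∞} (hq : 0 < q) {ν : Measure ℝ} {E : Set ℝ}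
    (hE : MeasurableSet E) {f : ℝ → ℝ≥0∞} (h : ∀ x ∈ E, f x = 0) : Nrm q ν E f = 0 := by
  unfold Nrm
  split_ifs with hq'
  · apply eSup_eq_zero
    convert measure_empty (μ := ν)
    ext y
    simp only [mem_ofPred_eq, mem_empty_iff_false, iff_false, not_and, not_not]
    exact h y
  · have hpos : 0 < q.toReal := ENNReal.toReal_pos hq.ne' hq'
    have h0 : ∫⁻ x in E, f x ^ q.toReal ∂ν = ∫⁻ _ in E, 0 ∂ν := by
      apply setLIntegral_congr_fun hE
      intro x hx
      simp [h x hx, hpos]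
    rw [h0, lintegral_zero, ENNReal.zero_rpow_of_pos (by positivity)]

/-- The level `0` never affects an essential supremum, so it suffices to compare the measures of
the superlevel sets at positive levels. -/
theorem eSup_congr {μ lam : Measure ℝ} {E F : Set ℝ} {f g : ℝ → ℝ≥0∞}
    (h : ∀ α : ℝ≥0∞, 0 < α →
      (lam {y | y ∈ E ∧ α ≤ f y} = 0 ↔ μ {y | y ∈ F ∧ α ≤ g y} = 0)) :
    eSup lam E f = eSup μ F g := by
  unfold eSup
  apply le_antisymm <;> refine sSup_le fun α hα => ?_ <;>
    rcases eq_or_ne α 0 with rfl | h0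
  · exact zero_le
  · exact le_sSup (pos_iff_ne_zero.2 fun h1 => hα.ne' ((h α (pos_iff_ne_zero.2 h0)).2 h1))
  · exact zero_le
  · exact le_sSup (pos_iff_ne_zero.2 fun h1 => hα.ne' ((h α (pos_iff_ne_zero.2 h0)).1 h1))

/-- Change of density: for `λ ≪ μ` on `(a,b)`, the `λ`-norm of `g` is the `μ`-norm of `g w`. -/
theorem Nrm_eq_Nrm_mul_RNw {p : ℝ≥0∞} (hp : 0 < p) {a b : ℝ} {lam μ : Measure ℝ}
    [(lam.restrict (Ioo a b)).HaveLebesgueDecomposition (μ.restrict (Ioo a b))]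
    (hac : lam.restrict (Ioo a b) ≪ μ.restrict (Ioo a b))
    {g : ℝ → ℝ≥0∞} (hg : Measurable g) :
    Nrm p lam (Ioo a b) g = Nrm p μ (Ioo a b) (fun t => g t * RNw p a b lam μ t) := by
  have hd := Measure.withDensity_rnDeriv_eq _ _ hac
  have hm := Measure.measurable_rnDeriv (lam.restrict (Ioo a b)) (μ.restrict (Ioo a b))
  unfold Nrm RNw
  split_ifs with hp'
  · apply eSup_congr
    intro α hα
    have e : ∀ (m : Measure ℝ) (f : ℝ → ℝ≥0∞),
        m {y | y ∈ Ioo a b ∧ α ≤ f y} = m.restrict (Ioo a b) {y | α ≤ f y} := by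
      intro m f
      rw [Measure.restrict_apply' measurableSet_Ioo, inter_comm]
      rfl
    rw [e, e]
    conv_lhs => rw [← hd]
    rw [withDensity_apply_eq_zero hm]
    have : {x | (lam.restrict (Ioo a b)).rnDeriv (μ.restrict (Ioo a b)) x ≠ 0} ∩ {y | α ≤ g y}
        = {y | α ≤ g y * {x | 0 < (lam.restrict (Ioo a b)).rnDeriv
            (μ.restrict (Ioo a b)) x}.indicator (fun _ => (1 : ℝ≥0∞)) y} := by
      ext y
      by_cases hy : (lam.restrict (Ioo a b)).rnDeriv (μ.restrict (Ioo a b)) y = 0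
      · simp [hy, hα.ne']
      · simp [hy, pos_iff_ne_zero]
    rw [this]
  · have hpos : 0 < p.toReal := ENNReal.toReal_pos hp.ne' hp'
    congr 1
    conv_lhs => rw [← hd]
    rw [lintegral_withDensity_eq_lintegral_mul _ hm (hg.pow_const _)]
    refine lintegral_congr fun t => ?_
    rw [ENNReal.mul_rpow_of_nonneg _ _ hpos.le, ← ENNReal.rpow_mul, one_div,
      inv_mul_cancel₀ hpos.ne', ENNReal.rpow_one, Pi.mul_apply, mul_comm]

/-- The weighted inequality for `λ` forces `λ ≪ μ` on `(a,b)`. -/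
theorem absolutelyContinuous_of_le {p q : ℝ≥0∞} (hp : 0 < p) (hq : 0 < q) {a b : ℝ}
    {lam μ ν : Measure ℝ} {u : ℝ → ℝ≥0∞} {S : ℝ → Set ℝ}
    (hS : ∀ x ∈ Ioo a b, S x ⊆ Ioo a b) {c : ℝ≥0∞}
    (h : ∀ g : ℝ → ℝ≥0∞, Measurable g →
      Nrm p lam (Ioo a b) g ≤ c * Nrm q ν (Ioo a b) (fun x => u x * eSup μ (S x) g)) :
    lam.restrict (Ioo a b) ≪ μ.restrict (Ioo a b) := by
  refine Measure.AbsolutelyContinuous.mk fun A hA hμ => ?_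
  rw [Measure.restrict_apply hA] at hμ ⊢
  have h1 := h (A.indicator fun _ => 1) (measurable_const.indicator hA)
  rw [Nrm_eq_zero hq measurableSet_Ioo, mul_zero, nonpos_iff_eq_zero] at h1
  · unfold Nrm at h1
    split_ifs at h1 with hp'
    · by_contra h2
      refine one_ne_zero (α := ℝ≥0∞) (le_bot_iff.1 ((le_sSup ?_).trans h1.le))
      have : {y | y ∈ Ioo a b ∧ (1 : ℝ≥0∞) ≤ A.indicator (fun _ => 1) y} = A ∩ Ioo a b := by
        ext y
        by_cases hy : y ∈ A <;> simp [hy]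
      rw [mem_ofPred_eq, this]
      exact pos_iff_ne_zero.2 h2
    · have hpos : 0 < p.toReal := ENNReal.toReal_pos hp.ne' hp'
      have e : ∀ x, (A.indicator (fun _ => (1 : ℝ≥0∞)) x) ^ p.toReal
          = A.indicator (fun _ => 1) x := by
        intro x
        by_cases hx : x ∈ A <;> simp [hx, hpos]
      simp only [e] at h1
      rw [ENNReal.rpow_eq_zero_iff_of_pos (by positivity), lintegral_indicator_const hA,
        one_mul, Measure.restrict_apply hA] at h1
      exact h1
  · intro x hx
    rw [eSup_eq_zero, mul_zero]
    refine measure_mono_null ?_ hμ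
    rintro y ⟨hy, hy'⟩
    exact ⟨by_contra fun hA' => hy' (by simp [hA']), hS x hx hy⟩

/-- Theorem 5.1: let `0 < p, q ≤ ∞`, let `λ, μ, ν` be non-negative Borel measures on
`(a,b)`, `u ∈ B⁺((a,b))`, and let `S_x = (a,x)` for all `x` or `S_x = (x,b)` for all
`x`.  Then `‖g‖_{p,(a,b),λ} ≤ c ‖u(x)‖g‖_{∞,S_x,μ}‖_{q,(a,b),ν}` holds for all
`g ∈ B⁺((a,b))` iff `λ` is absolutely continuous with respect to `μ` (on `(a,b)`) and
`‖gw‖_{p,(a,b),μ} ≤ c′ ‖u(x)‖g‖_{∞,S_x,μ}‖_{q,(a,b),ν}` holds for all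
`g ∈ B⁺((a,b))`, where `w = (dλ/dμ)^{1/p}`. -/
theorem statement13 (p q : ℝ≥0∞) (hp : 0 < p) (hq : 0 < q) (a b : ℝ) (hab : a < b)
    (lam μ ν : Measure ℝ)
    [(lam.restrict (Ioo a b)).HaveLebesgueDecomposition (μ.restrict (Ioo a b))]
    (u : ℝ → ℝ≥0∞) (hu : Measurable u)
    (S : ℝ → Set ℝ) (hS : (∀ x, S x = Ioo a x) ∨ (∀ x, S x = Ioo x b)) :
    (∃ c : ℝ≥0∞, 0 < c ∧ c < ⊤ ∧ ∀ g : ℝ → ℝ≥0∞, Measurable g →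
        Nrm p lam (Ioo a b) g ≤
          c * Nrm q ν (Ioo a b) (fun x => u x * eSup μ (S x) g)) ↔
      (lam.restrict (Ioo a b) ≪ μ.restrict (Ioo a b) ∧
        ∃ c' : ℝ≥0∞, 0 < c' ∧ c' < ⊤ ∧ ∀ g : ℝ → ℝ≥0∞, Measurable g →
          Nrm p μ (Ioo a b) (fun t => g t * RNw p a b lam μ t) ≤
            c' * Nrm q ν (Ioo a b) (fun x => u x * eSup μ (S x) g)) := by
  have hS' : ∀ x ∈ Ioo a b, S x ⊆ Ioo a b := by
    intro x hx
    rcases hS with hS | hS <;> rw [hS]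
    · exact Ioo_subset_Ioo_right hx.2.le
    · exact Ioo_subset_Ioo_left hx.1.le
  constructor
  · rintro ⟨c, hc0, hc, h⟩
    have hac := absolutelyContinuous_of_le hp hq hS' h
    exact ⟨hac, c, hc0, hc, fun g hg => Nrm_eq_Nrm_mul_RNw hp hac hg ▸ h g hg⟩
  · rintro ⟨hac, c, hc0, hc, h⟩
    exact ⟨c, hc0, hc, fun g hg => (Nrm_eq_Nrm_mul_RNw hp hac hg).symm ▸ h g hg⟩
end
end

section
/- Let μ and ν be non-negative Borel measures on I = (a,b) ⊆ ℝ and let w, u ∈ B⁺(I). Then ‖ w(x) · ‖u‖_{∞,(a,x),ν}^{−1} ‖_{∞,(a,b),μ} = ‖ ‖w‖_{∞,(a,x],μ} · ‖u‖_{∞,(a,x),ν}^{−1} ‖_{∞,(a,b),μ}. -/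
/-!
Since `x ↦ (eSup ν (Ioo a x) u)⁻¹` is nonincreasing, an almost-everywhere bound `C` of
`w y * (eSup ν (Ioo a y) u)⁻¹` also bounds `w y * (eSup ν (Ioo a x) u)⁻¹` for almost every
`y ≤ x`; taking the essential supremum over `y ∈ Ioc a x` shows that the right side is at most the
left. The reverse inequality follows from `ae_le_running_eSup`: almost everywhere `w x` is at most
its essential supremum over `Ioc a x`. This includes `x` itself, so atoms of `μ` do no harm, and a
Lindelöf argument disposes of the uncountably many null sets. Both steps use the characterization
of `eSup` as the least almost-everywhere bound, `eSup_le_iff`.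
-/

open MeasureTheory Set ENNReal

noncomputable section

/-- The value `eSup μ E f` is the least almost-everywhere bound of `f` on `E`; no measurability is
needed, since `{C < f}` is a countable union of sets `{q ≤ f}` with `C < q`. -/
lemma eSup_le_iff (μ : Measure ℝ) (E : Set ℝ) (f : ℝ → ℝ≥0∞) (C : ℝ≥0∞) :
    eSup μ E f ≤ C ↔ ∀ᵐ x ∂μ, x ∈ E → f x ≤ C := by
  constructor
  · intro h
    have key : ∀ᵐ x ∂μ, ∀ q : ℚ, C < (Real.toNNReal q : ℝ≥0∞) →
        ¬ (x ∈ E ∧ (Real.toNNReal q : ℝ≥0∞) ≤ f x) := by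
      refine ae_all_iff.2 fun q => ?_
      by_cases hq : C < (Real.toNNReal q : ℝ≥0∞)
      · have h0 : μ {y | y ∈ E ∧ (Real.toNNReal q : ℝ≥0∞) ≤ f y} = 0 := by
          by_contra hne
          have hle : (Real.toNNReal q : ℝ≥0∞) ≤ eSup μ E f := le_sSup (pos_iff_ne_zero.2 hne)
          exact absurd (hle.trans h) (not_le.2 hq)
        filter_upwards [measure_eq_zero_iff_ae_notMem.1 h0] with x hx _ using hx
      · exact Filter.Eventually.of_forall fun x hx => absurd hx hq
    filter_upwards [key] with x hx hxE
    by_contra! hlt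
    obtain ⟨q, -, h1, h2⟩ := ENNReal.lt_iff_exists_rat_btwn.1 hlt
    exact hx q h1 ⟨hxE, h2.le⟩
  · intro h
    refine sSup_le fun α hα => ?_
    by_contra! hlt
    refine hα.ne' (measure_mono_null (fun y hy => ?_) (ae_iff.1 h))
    exact fun hy' => absurd (hy.2.trans (hy' hy.1)) (not_le.2 hlt)

lemma ae_le_eSup (μ : Measure ℝ) (E : Set ℝ) (f : ℝ → ℝ≥0∞) :
    ∀ᵐ x ∂μ, x ∈ E → f x ≤ eSup μ E f :=
  (eSup_le_iff μ E f _).1 le_rfl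

lemma eSup_mono_set (μ : Measure ℝ) {E F : Set ℝ} (h : E ⊆ F) (f : ℝ → ℝ≥0∞) :
    eSup μ E f ≤ eSup μ F f := by
  rw [eSup_le_iff]
  filter_upwards [ae_le_eSup μ F f] with x hx hxE using hx (h hxE)

/-- Almost everywhere, `w` lies below its running essential supremum. For rational `q` the set
where `eSup μ (Ioc a x) w ≤ q < w x` meets each `Iic x`, with `x` in it, in a null set, so it is
locally null and hence null. -/
lemma ae_le_running_eSup (μ : Measure ℝ) (a : ℝ) (w : ℝ → ℝ≥0∞) :
    ∀ᵐ x ∂μ, a < x → w x ≤ eSup μ (Ioc a x) w := by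
  have key : ∀ᵐ x ∂μ, ∀ q : ℚ,
      ¬ (a < x ∧ eSup μ (Ioc a x) w ≤ (Real.toNNReal q : ℝ≥0∞) ∧
        (Real.toNNReal q : ℝ≥0∞) < w x) := by
    refine ae_all_iff.2 fun q => ?_
    set s : Set ℝ := {x | a < x ∧ eSup μ (Ioc a x) w ≤ (Real.toNNReal q : ℝ≥0∞) ∧
        (Real.toNNReal q : ℝ≥0∞) < w x} with hs
    have hnull : ∀ x ∈ s, μ (s ∩ Iic x) = 0 := by
      intro x hx
      refine measure_mono_null (fun y hy => ?_) (ae_iff.1 ((eSup_le_iff _ _ _ _).1 hx.2.1))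
      exact fun h => absurd (h ⟨hy.1.1, hy.2⟩) (not_le.2 hy.1.2.2)
    refine measure_eq_zero_iff_ae_notMem.1 (measure_null_of_locally_null s fun x hx => ?_)
    by_cases hmax : ∃ y ∈ s, x < y
    · obtain ⟨y, hy, hxy⟩ := hmax
      exact ⟨s ∩ Iic y, Filter.inter_mem self_mem_nhdsWithin
        (mem_nhdsWithin_of_mem_nhds (Iic_mem_nhds hxy)), hnull y hy⟩
    · -- Here `x` is the maximum of `s`, where `Iic x` need not be a neighbourhood of `x`.
      push Not at hmax
      refine ⟨s, self_mem_nhdsWithin, ?_⟩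
      have hsub : s ⊆ Iic x := hmax
      rw [← hnull x hx, inter_eq_left.2 hsub]
  filter_upwards [key] with x hx hax
  by_contra! hlt
  obtain ⟨q, -, h1, h2⟩ := ENNReal.lt_iff_exists_rat_btwn.1 hlt
  exact hx q ⟨hax, h1.le, h2⟩

/-- Exchange of essential suprema:
`‖w(x) ‖u‖_{∞,(a,x),ν}⁻¹‖_{∞,(a,b),μ} = ‖‖w‖_{∞,(a,x],μ} ‖u‖_{∞,(a,x),ν}⁻¹‖_{∞,(a,b),μ}`
for all `w, u ∈ B⁺((a,b))`. -/
theorem statement15 (a b : ℝ) (hab : a < b) (μ ν : Measure ℝ)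
    (w u : ℝ → ℝ≥0∞) (hw : Measurable w) (hu : Measurable u) :
    eSup μ (Ioo a b) (fun x => w x * (eSup ν (Ioo a x) u)⁻¹) =
      eSup μ (Ioo a b) (fun x => eSup μ (Ioc a x) w * (eSup ν (Ioo a x) u)⁻¹) := by
  apply le_antisymm
  · rw [eSup_le_iff]
    filter_upwards [ae_le_running_eSup μ a w, ae_le_eSup μ (Ioo a b)
      (fun x => eSup μ (Ioc a x) w * (eSup ν (Ioo a x) u)⁻¹)] with x h1 h2 hx
    exact (mul_le_mul_left (h1 hx.1) _).trans (h2 hx)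
  · rw [eSup_le_iff]
    set C := eSup μ (Ioo a b) (fun x => w x * (eSup ν (Ioo a x) u)⁻¹) with hC
    refine Filter.Eventually.of_forall fun x hx => ?_
    change sSup _ * _ ≤ C
    rw [ENNReal.sSup_mul]
    refine iSup₂_le fun α hα => ?_
    -- A set of positive measure contains a point at which the almost-everywhere bound `C` holds.
    have hex : ∃ y, (y ∈ Ioc a x ∧ α ≤ w y) ∧ w y * (eSup ν (Ioo a y) u)⁻¹ ≤ C := by
      by_contra! hno
      refine (show 0 < μ _ from hα).ne' (measure_mono_null (fun y hy => ?_) (ae_iff.1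
        (ae_le_eSup μ (Ioo a b) (fun x => w x * (eSup ν (Ioo a x) u)⁻¹))))
      exact fun h => absurd (h ⟨hy.1.1, hy.1.2.trans_lt hx.2⟩) (not_le.2 (hno y hy))
    obtain ⟨y, ⟨hy, hαy⟩, hyC⟩ := hex
    refine le_trans (mul_le_mul' hαy (ENNReal.inv_le_inv.2 ?_)) hyC
    exact eSup_mono_set ν (Ioo_subset_Ioo_right hy.2) u
end
end
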